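/- arXiv:1701.04633 — 4 statements merged into one kernel-verified Lean document; each statement's English description precedes it below -/
import Mathlib

section
/- Let f ∈ ℤ[X] be monic with f = g₁⋯g_k, where g₁,…,g_k ∈ ℤ[X] are irreducible, monic and pairwise distinct, and let Z_f = ℤ[X]/(f). Then the Dirichlet series Σ_{n=1}^∞ a_n(Z_f) n^{-s} converges for every complex s with Re(s) > 1, and there exists a function Z, meromorphic on the half-plane {s ∈ ℂ : Re(s) > 0}, which agrees with the series on {Re(s) > 1} and has a pole of order exactly k at s = 1. -/
/-!
Put `R = ℤ[X] / (f)`. It embeds with finite index in `O = ∏ i, 𝓞 (K i)`, where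
`K i = ℚ[X] / (g i)` (`exists_embedding`); let `m ≥ 1` satisfy `m O ⊆ R`.

*Reduction to Dedekind zeta functions.* In either ring a finite-index ideal is uniquely an
intersection of an ideal containing a power of `m` with an ideal modulo which `m` is invertible, and
indices multiply (`idealSum_eq_mul`). So the zeta functions factor as `Z_R = E_R * C_R` and
`Z_O = E_O * C_O`, and `C_R = C_O` because the rings have the same ideals away from `m`
(`comap_bijective`). Here `E_O` is a finite product of geometric series, without zeros on `Re s > 0`
(`primarySum_ringOfIntegers`). An ideal `J` of `R` satisfies `m J O ⊆ J ⊆ J O` and `[J O : m J O]`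
is independent of `J`, so only boundedly many `J` have a given extension `J O`, and `E_R` also
converges on `Re s > 0` (`summable_primaryIdeal_subring`); it is positive at `s = 1`. Hence
`Z_R = (∏ i, ζ_{K i}) * E_R / E_O`, and the pole of order `k` comes from the `k` Dedekind zeta
functions.

*Continuation of the Dedekind zeta function to `Re s > 0`* (`exists_dedekindZeta_meromorphic`). The
partial zeta function of an ideal class is a sum of `|N x| ^ (-s)` over the lattice of an ideal
modulo units. The quotient by units is handled by a smooth cutoff on Minkowski space whose unit
translates sum to a constant (`hasSum_unitCutoff`), so that the partial zeta function becomes a sum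
over a full lattice `L` of rank `d` of a function `F s`, homogeneous of degree `-d s` and smooth off the
origin. For such sums (`lattice_sum_continuation`), adding up all sign characters of `L / 2L` gives
`2 ^ d ∑ F s (2 a) = 2 ^ (d (1 - s)) ∑ F s a`, so `(1 - 2 ^ (d (1 - s))) ∑ F s a` is minus the sum of the
nontrivially twisted series. Those converge on `Re s > 0` after `d` summations by parts, as the
`d`-th differences of `F s` decay like `‖a‖ ^ (-d Re s - d)`. The factor `1 - 2 ^ (d (1 - s))` has a
simple zero at `1`, and the residue of the zeta function is nonzero by the analytic class number
formula.
-/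

open Filter Topology

/-! ### Finite differences of homogeneous functions -/

/-- The `m`-th forward difference of a `C^m` function with step `h` is `O(‖h‖ ^ m)`, uniformly on
bounded sets: integrate the derivative along `h` one difference at a time. -/
lemma norm_fwdDiff_iter_le {E : Type} [NormedAddCommGroup E] [NormedSpace ℝ E]
    [FiniteDimensional ℝ E] (m : ℕ) :
    ∀ {G : Type} [NormedAddCommGroup G] [NormedSpace ℝ G] (Φ : E → G), ContDiff ℝ m Φ →
    ∀ R : ℝ, ∃ C : ℝ, 0 ≤ C ∧ ∀ x h : E, ‖x‖ ≤ R → ‖h‖ ≤ 1 →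
      ‖(fwdDiff h)^[m] Φ x‖ ≤ C * ‖h‖ ^ m := by
  induction m with
  | zero =>
    intro G _ _ Φ hΦ R
    have : ProperSpace E := FiniteDimensional.proper ℝ E
    obtain ⟨C, hC⟩ := (isCompact_closedBall (0 : E) R).exists_bound_of_continuousOn
      (hΦ.continuous.continuousOn)
    refine ⟨max C 0, le_max_right _ _, fun x h hx _ => ?_⟩
    simpa using Or.inl (hC x (by simpa using hx))
  | succ m ih =>
    intro G _ _ Φ hΦ R
    have hd : ContDiff ℝ m (fderiv ℝ Φ) := hΦ.fderiv_right (by norm_cast)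
    have hdiff : Differentiable ℝ Φ := hΦ.differentiable (by norm_cast)
    obtain ⟨C, hC0, hC⟩ := ih (fderiv ℝ Φ) hd (R + 1)
    refine ⟨C, hC0, fun x h hx hh => ?_⟩
    -- the derivative of `t ↦ Δ_h^m Φ (x + t h)` is `(Δ_h^m DΦ)(x + t h) h`
    have hder : ∀ t : ℝ, HasDerivAt (fun t : ℝ => (fwdDiff h)^[m] Φ (x + t • h))
        (((fwdDiff h)^[m] (fderiv ℝ Φ) (x + t • h)) h) t := by
      intro t
      simp only [fwdDiff_iter_eq_sum_shift, sum_apply]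
      refine HasDerivAt.fun_sum fun k _ => ?_
      have h1 : HasDerivAt (fun t : ℝ => x + t • h + k • h) h t := by
        simpa using (((hasDerivAt_id t).smul_const h).const_add x).add_const (k • h)
      have h2 := (hdiff (x + t • h + k • h)).hasFDerivAt.comp_hasDerivAt t h1
      simpa using! h2.const_smul ((-1 : ℤ) ^ (m - k) * (m.choose k : ℤ))
    have key := norm_image_sub_le_of_norm_deriv_le_segment_01'
      (f := fun t : ℝ => (fwdDiff h)^[m] Φ (x + t • h)) (C := C * ‖h‖ ^ m * ‖h‖)
      (fun t _ => (hder t).hasDerivWithinAt) (fun t ht => by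
        refine (ContinuousLinearMap.le_opNorm _ _).trans ?_
        gcongr
        refine hC _ _ ?_ hh
        refine (norm_add_le _ _).trans ?_
        rw [norm_smul, Real.norm_of_nonneg ht.1]
        nlinarith [ht.1, ht.2, norm_nonneg h])
    rw [Function.iterate_succ_apply', fwdDiff]
    simpa [pow_succ, mul_assoc] using key

/-- If `F s` is homogeneous of degree `-d s` and `C^m` away from the origin, its `m`-th difference
with a fixed step decays like `‖x‖ ^ (-d σ - m)`: after rescaling `x` to the unit sphere the step
has length `‖e‖ / ‖x‖`. The function `Φ` is a globally smooth function of `(s, x)` that agrees with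
`F` off the ball of radius `1 / 2`. -/
lemma norm_fwdDiff_homogeneous_le {V : Type} [NormedAddCommGroup V] [NormedSpace ℝ V]
    [FiniteDimensional ℝ V] (d m : ℕ) (F : ℂ → V → ℂ) (Φ : ℂ × V → ℂ)
    (hhom : ∀ s, ∀ R : ℝ, 0 < R → ∀ x, F s (R • x) = (R : ℂ) ^ (-(d * s)) * F s x)
    (hΦ : ContDiff ℝ m Φ) (hFΦ : ∀ s x, 1 / 2 ≤ ‖x‖ → F s x = Φ (s, x))
    (e : V) (σ M : ℝ) :
    ∃ C R₀ : ℝ, 0 < R₀ ∧ ∀ s : ℂ, σ ≤ s.re → ‖s‖ ≤ M → ∀ x, R₀ ≤ ‖x‖ →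
      ‖(fwdDiff e)^[m] (F s) x‖ ≤ C * ‖x‖ ^ (-(d * σ) - m) := by
  obtain ⟨C, hC0, hC⟩ := norm_fwdDiff_iter_le m Φ hΦ (max M 1)
  refine ⟨C * ‖e‖ ^ m, 1 + 2 * m * ‖e‖ + ‖e‖, by positivity, fun s hs hM x hx => ?_⟩
  set R := ‖x‖ with hR
  have he := norm_nonneg e
  have hme : 0 ≤ (m : ℝ) * ‖e‖ := by positivity
  have hR1 : 1 ≤ R := by linarith
  have hRpos : 0 < R := by linarith
  have hy : ‖R⁻¹ • x‖ = 1 := by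
    rw [norm_smul, norm_inv, Real.norm_of_nonneg hRpos.le, ← hR, inv_mul_cancel₀ hRpos.ne']
  have hscale : (fwdDiff e)^[m] (F s) x = (R : ℂ) ^ (-(d * s)) *
      (fwdDiff ((0 : ℂ), R⁻¹ • e))^[m] Φ (s, R⁻¹ • x) := by
    rw [fwdDiff_iter_eq_sum_shift, fwdDiff_iter_eq_sum_shift, Finset.mul_sum]
    refine Finset.sum_congr rfl fun k hk => ?_
    have hk' : (k : ℝ) ≤ m := by
      exact_mod_cast Nat.lt_succ_iff.mp (Finset.mem_range.mp hk)
    have hx' : x + k • e = R • (R⁻¹ • x + k • (R⁻¹ • e)) := by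
      rw [smul_add, smul_inv_smul₀ hRpos.ne', smul_comm k, smul_inv_smul₀ hRpos.ne']
    have hn : 1 / 2 ≤ ‖R⁻¹ • x + k • (R⁻¹ • e)‖ := by
      have h1 : ‖k • (R⁻¹ • e)‖ ≤ 1 / 2 := by
        rw [← Nat.cast_smul_eq_nsmul ℝ, norm_smul, norm_smul, norm_inv,
          Real.norm_of_nonneg hRpos.le, Real.norm_of_nonneg (Nat.cast_nonneg k)]
        rw [← div_eq_inv_mul, ← mul_div_assoc, div_le_iff₀ hRpos]
        nlinarith
      have h2 := norm_sub_le_norm_add (R⁻¹ • x) (k • (R⁻¹ • e))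
      rw [hy] at h2
      linarith
    rw [hx', hhom s R hRpos, hFΦ s _ hn]
    simp only [Prod.mk_add_mk, Prod.smul_mk, smul_zero, add_zero, mul_smul_comm]
  rw [hscale, norm_mul, Complex.norm_cpow_eq_rpow_re_of_pos hRpos]
  have hb := hC (s, R⁻¹ • x) ((0 : ℂ), R⁻¹ • e) (by
    rw [Prod.norm_mk, hy]; exact max_le_max hM le_rfl) (by
    rw [Prod.norm_mk, norm_zero, norm_smul, norm_inv, Real.norm_of_nonneg hRpos.le]
    refine max_le zero_le_one ?_
    rw [← div_eq_inv_mul, div_le_iff₀ hRpos]; linarith)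
  have hne : ‖((0 : ℂ), R⁻¹ • e)‖ = R⁻¹ * ‖e‖ := by
    rw [Prod.norm_mk, norm_zero, norm_smul, norm_inv, Real.norm_of_nonneg hRpos.le]
    exact max_eq_right (by positivity)
  rw [hne] at hb
  have hre : (-(↑d * s)).re ≤ -(d * σ) := by
    simp only [Complex.neg_re, Complex.mul_re, Complex.natCast_re, Complex.natCast_im, zero_mul,
      sub_zero, neg_le_neg_iff]
    gcongr
  calc _ ≤ R ^ (-(d * σ)) * (C * (R⁻¹ * ‖e‖) ^ m) := by
        gcongr
    _ = _ := by
        rw [Real.rpow_sub hRpos, Real.rpow_natCast, mul_pow, inv_pow]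
        field_simp

/-! ### Lattice sums of homogeneous functions -/

/-- Summation by parts against a sign character: if translation by `e` changes the sign of `χ`, each
forward difference multiplies the twisted sum by `-2`. -/
lemma tsum_mul_fwdDiff_iter {L : Type} [AddCommGroup L] (χ f : L → ℂ) (e : L)
    (hχ : ∀ a, ‖χ a‖ ≤ 1) (hχe : ∀ a, χ (a + e) = -χ a) (hf : Summable fun a => ‖f a‖) (m : ℕ) :
    (Summable fun a => ‖(fwdDiff e)^[m] f a‖) ∧
      ∑' a, χ a * (fwdDiff e)^[m] f a = (-2) ^ m * ∑' a, χ a * f a := by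
  induction m with
  | zero => simpa using hf
  | succ m ih =>
    obtain ⟨h1, h2⟩ := ih
    set g := (fwdDiff e)^[m] f with hg
    have hs : Summable fun a => ‖g (a + e)‖ := ((Equiv.addRight e).summable_iff
      (f := fun a => ‖g a‖)).mpr h1
    have hmul : ∀ (k : L → ℂ), (Summable fun a => ‖k a‖) → Summable fun a => χ a * k a :=
      fun k hk => Summable.of_norm_bounded hk fun a => by
        rw [norm_mul]; exact mul_le_of_le_one_left (norm_nonneg _) (hχ a)
    refine ⟨?_, ?_⟩
    · rw [Function.iterate_succ_apply']
      exact Summable.of_nonneg_of_le (fun _ => norm_nonneg _) (fun a => norm_sub_le _ _) (hs.add h1)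
    · rw [Function.iterate_succ_apply', ← hg]
      have h3 : ∑' a, χ a * g (a + e) = -∑' a, χ a * g a := by
        rw [← tsum_neg, ← (Equiv.addRight e).tsum_eq (fun a => -(χ a * g a))]
        simp [hχe]
      simp only [fwdDiff, mul_sub]
      rw [(hmul _ hs).tsum_sub (hmul _ h1), h3, h2]
      ring

/-- Orthogonality of the `2 ^ d` sign characters of `L / 2L`: summed over all of them, only the
sublattice `2L` survives. -/
lemma sum_sign_characters {L ι : Type} [AddCommGroup L] [Fintype ι] (b : Module.Basis ι ℤ L)
    (f : L → ℂ) (hf : Summable fun a => ‖f a‖) :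
    ∑ T : Finset ι, ∑' a, (∏ i ∈ T, (-1 : ℂ) ^ (b.repr a i)) * f a =
      2 ^ Fintype.card ι * ∑' a, f ((2 : ℤ) • a) := by
  classical
  have hone : ∀ (T : Finset ι) a, ‖∏ i ∈ T, (-1 : ℂ) ^ (b.repr a i)‖ ≤ 1 := fun T a => by
    simp [norm_prod, norm_zpow]
  rw [← Summable.tsum_finsetSum fun T _ => Summable.of_norm_bounded hf fun a => by
        rw [norm_mul]; exact mul_le_of_le_one_left (norm_nonneg _) (hone T a)]
  simp_rw [← Finset.sum_mul]
  have hprod : ∀ a, ∑ T : Finset ι, ∏ i ∈ T, (-1 : ℂ) ^ (b.repr a i) =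
      ∏ i, (1 + (-1 : ℂ) ^ (b.repr a i)) := fun a => by
    rw [Finset.prod_one_add, Finset.powerset_univ]
  simp_rw [hprod]
  have hinj : Function.Injective fun a : L => (2 : ℤ) • a := by
    intro x y hxy
    apply b.repr.injective
    ext i
    have := congrArg (fun z => b.repr z i) hxy
    simpa using this
  rw [← hinj.tsum_eq, ← tsum_mul_left]
  · refine tsum_congr fun a => ?_
    congr 1
    rw [Fintype.card, ← Finset.prod_const]
    refine Finset.prod_congr rfl fun i _ => ?_
    simp only [map_smul, Finsupp.smul_apply, smul_eq_mul, zpow_mul]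
    norm_num
  · intro a ha
    -- off `2L` some coordinate is odd and the product vanishes
    have hev : ∀ i, Even (b.repr a i) := by
      intro i
      by_contra hodd
      rw [Int.not_even_iff_odd] at hodd
      refine ha ?_
      have : ∏ i, (1 + (-1 : ℂ) ^ (b.repr a i)) = 0 :=
        Finset.prod_eq_zero (Finset.mem_univ i) (by rw [hodd.neg_one_zpow]; ring)
      simp only [this, zero_mul]
    choose c hc using hev
    refine ⟨∑ i, c i • b i, ?_⟩
    change (2 : ℤ) • ∑ i, c i • b i = a
    rw [Finset.smul_sum, ← b.sum_repr a]
    refine Finset.sum_congr rfl fun i _ => ?_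
    rw [hc i, smul_smul, two_mul]

lemma finite_lattice_norm_lt {V : Type} [NormedAddCommGroup V] [NormedSpace ℝ V]
    [FiniteDimensional ℝ V] (L : Submodule ℤ V) [DiscreteTopology L] (R : ℝ) :
    {a : L | ‖(a : V)‖ < R}.Finite := by
  have : ProperSpace V := FiniteDimensional.proper ℝ V
  have H : IsClosed (X := V) L := @AddSubgroup.isClosed_of_discrete _ _ _ _ _
    L.toAddSubgroup (inferInstanceAs (DiscreteTopology L))
  refine ((Metric.finite_isBounded_inter_isClosed DiscreteTopology.isDiscrete
    (Metric.isBounded_closedBall (x := (0 : V)) (r := R)) H).preimage_embedding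
    (.subtype _)).subset ?_
  intro a ha
  simpa using le_of_lt ha

/-- For `F s` homogeneous of degree `-d s` and smooth off the origin, the sum of `F s` over a lattice
of rank `d` continues, after multiplication by `1 - 2 ^ (d (1 - s))`, to `Re s > 0`. By homogeneity
and orthogonality this product is minus the sum of the nontrivial sign-twisted series, and
summation by parts `d` times makes each of those converge for `Re s > 0`. -/
theorem lattice_sum_continuation {V : Type} [NormedAddCommGroup V] [NormedSpace ℝ V]
    [FiniteDimensional ℝ V] (L : Submodule ℤ V) [DiscreteTopology L] [IsZLattice ℝ L] (d : ℕ) (hd : 0 < d)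
    (hrank : Module.finrank ℤ L = d) (F : ℂ → V → ℂ) (Φ : ℂ × V → ℂ)
    (hhom : ∀ s, ∀ R : ℝ, 0 < R → ∀ x, F s (R • x) = (R : ℂ) ^ (-(d * s)) * F s x)
    (hΦ : ContDiff ℝ d Φ) (hFΦ : ∀ s x, 1 / 2 ≤ ‖x‖ → F s x = Φ (s, x))
    (hhol : ∀ x, Differentiable ℂ fun s => F s x) :
    ∃ A : ℂ → ℂ, DifferentiableOn ℂ A {s | 0 < s.re} ∧ ∀ s : ℂ, 1 < s.re →
      (Summable fun a : L => ‖F s a‖) ∧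
      (1 - (2 : ℂ) ^ (d * (1 - s))) * ∑' a : L, F s a = A s := by
  classical
  have hfree : Module.Free ℤ L := ZLattice.module_free ℝ L
  have hfin : Module.Finite ℤ L := ZLattice.module_finite ℝ L
  let ι := Module.Free.ChooseBasisIndex ℤ L
  let b : Module.Basis ι ℤ L := Module.Free.chooseBasis ℤ L
  have hcard : Fintype.card ι = d := by rw [← hrank, Module.finrank_eq_card_basis b]
  let χ : Finset ι → L → ℂ := fun T a => ∏ i ∈ T, (-1 : ℂ) ^ (b.repr a i)
  have hχ1 : ∀ T a, ‖χ T a‖ ≤ 1 := fun T a => by simp [χ, norm_prod, norm_zpow]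
  let e : Finset ι → L := fun T => if h : T.Nonempty then b h.choose else 0
  have hχe : ∀ T : Finset ι, T.Nonempty → ∀ a, χ T (a + e T) = -χ T a := by
    intro T hT a
    simp only [χ, e, dif_pos hT, map_add, Finsupp.add_apply, Module.Basis.repr_self]
    rw [← Finset.mul_prod_erase T _ hT.choose_spec, ← Finset.mul_prod_erase T _ hT.choose_spec,
      Finsupp.single_eq_same, zpow_add₀ (by norm_num : (-1 : ℂ) ≠ 0), zpow_one, mul_neg_one,
      neg_mul]
    congr 2
    refine Finset.prod_congr rfl fun i hi => ?_
    rw [Finsupp.single_eq_of_ne (Finset.ne_of_mem_erase hi), add_zero]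
  have hsum : ∀ s : ℂ, 1 < s.re → Summable fun a : L => ‖F s a‖ := by
    intro s hs
    obtain ⟨C, R₀, hR₀, hC⟩ := norm_fwdDiff_homogeneous_le d 0 F Φ hhom
      (hΦ.of_le (by norm_cast; omega)) hFΦ 0 s.re ‖s‖
    refine Summable.of_norm_bounded_eventually
      (g := fun a : L => C * ‖a‖ ^ (-(d * s.re) - (0 : ℕ)))
      ((ZLattice.summable_norm_rpow L _ ?_).mul_left C) ?_
    · rw [hrank]
      have : (0 : ℝ) < d := by exact_mod_cast hd
      push_cast
      nlinarith
    · refine (finite_lattice_norm_lt L R₀).subset fun a ha => ?_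
      by_contra hlt
      refine ha ?_
      simpa using hC s le_rfl le_rfl a (not_lt.mp hlt)
  have hshift : ∀ s (v a : L), (fwdDiff v)^[d] (fun a : L => F s a) a =
      (fwdDiff (v : V))^[d] (F s) a := by
    intro s v a
    simp [fwdDiff_iter_eq_sum_shift]
  have hhold : ∀ (v a : L), Differentiable ℂ fun s => (fwdDiff (v : V))^[d] (F s) a := by
    intro v a
    simp only [fwdDiff_iter_eq_sum_shift, zsmul_eq_mul]
    exact Differentiable.fun_sum fun k _ => (hhol _).const_mul _
  refine ⟨fun s => -∑ T ∈ (Finset.univ : Finset (Finset ι)).erase ∅, ((-2) ^ d)⁻¹ *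
    ∑' a : L, χ T a * (fwdDiff (e T : V))^[d] (F s) a, ?_, ?_⟩
  · refine DifferentiableOn.fun_neg (DifferentiableOn.fun_sum fun T _ =>
      DifferentiableOn.const_mul ?_ _)
    intro s₀ hs₀
    have hs₀' : 0 < s₀.re := hs₀
    refine DifferentiableAt.differentiableWithinAt ?_
    let U : Set ℂ := {s | s₀.re / 2 < s.re} ∩ Metric.ball 0 (‖s₀‖ + 1)
    have hU : IsOpen U := (isOpen_lt continuous_const Complex.continuous_re).inter
      Metric.isOpen_ball
    have hs₀U : s₀ ∈ U := ⟨by simp only [Set.mem_ofPred_eq]; linarith, by simp⟩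
    refine DifferentiableOn.differentiableAt ?_ (hU.mem_nhds hs₀U)
    obtain ⟨C, R₀, hR₀, hC⟩ := norm_fwdDiff_homogeneous_le d d F Φ hhom
      hΦ hFΦ (e T) (s₀.re / 2) (‖s₀‖ + 1)
    have hB : ∀ a : L, ∃ B, ∀ s ∈ Metric.closedBall (0 : ℂ) (‖s₀‖ + 1),
        ‖(fwdDiff (e T : V))^[d] (F s) a‖ ≤ B := fun a =>
      (isCompact_closedBall (0 : ℂ) (‖s₀‖ + 1)).exists_bound_of_continuousOn
        (hhold (e T) a).continuous.continuousOn
    choose B hB using hB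
    refine Complex.differentiableOn_tsum_of_summable_norm
      (u := fun a : L => if ‖(a : V)‖ < R₀ then B a else
        C * ‖a‖ ^ (-(d * (s₀.re / 2)) - d)) ?_ ?_ hU ?_
    · refine Summable.congr_cofinite (f := fun a : L => C * ‖a‖ ^ (-(d * (s₀.re / 2)) - d))
        ((ZLattice.summable_norm_rpow L _ ?_).mul_left C) ?_
      · rw [hrank]
        have : (0 : ℝ) < d := by exact_mod_cast hd
        nlinarith
      · refine (finite_lattice_norm_lt L R₀).subset fun a ha => ?_
        by_contra hlt
        refine ha ?_
        exact (if_neg hlt).symm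
    · exact fun a => ((hhold (e T) a).const_mul _).differentiableOn
    · intro a s hs
      rw [norm_mul]
      refine (mul_le_of_le_one_left (norm_nonneg _) (hχ1 T a)).trans ?_
      have hsb := Metric.ball_subset_closedBall hs.2
      split_ifs with hlt
      · exact hB a s hsb
      · exact hC s (le_of_lt hs.1) (by simpa using hsb) a (not_lt.mp hlt)
  · intro s hs
    refine ⟨hsum s hs, ?_⟩
    have hall := sum_sign_characters b (fun a : L => F s a) (hsum s hs)
    rw [← Finset.add_sum_erase _ _ (Finset.mem_univ ∅)] at hall
    simp only [Finset.prod_empty, one_mul] at hall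
    have hdouble : ∑' a : L, F s ((2 : ℤ) • a : L) = (2 : ℂ) ^ (-(d * s)) * ∑' a : L, F s a := by
      rw [← tsum_mul_left]
      refine tsum_congr fun a => ?_
      have := hhom s 2 (by norm_num) (a : V)
      rw [← Complex.ofReal_ofNat, ← this]
      congr 1
      rw [Submodule.coe_smul, ← Int.cast_smul_eq_zsmul ℝ]
      norm_num
    rw [hdouble, hcard] at hall
    have hpow : (2 : ℂ) ^ (d * (1 - s)) = 2 ^ d * (2 : ℂ) ^ (-(d * s)) := by
      rw [← Complex.cpow_natCast, ← Complex.cpow_add _ _ (by norm_num)]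
      congr 1; ring
    have hterm : ∀ T ∈ (Finset.univ : Finset (Finset ι)).erase ∅,
        ((-2) ^ d)⁻¹ * ∑' a : L, χ T a * (fwdDiff (e T : V))^[d] (F s) a =
        ∑' a : L, (∏ i ∈ T, (-1 : ℂ) ^ (b.repr a i)) * F s a := by
      intro T hT
      have hT' : T.Nonempty := Finset.nonempty_iff_ne_empty.mpr (Finset.ne_of_mem_erase hT)
      have := (tsum_mul_fwdDiff_iter (χ T) (fun a : L => F s a) (e T) (hχ1 T) (hχe T hT')
        (hsum s hs) d).2
      simp only [hshift] at this
      rw [this, inv_mul_cancel_left₀ (pow_ne_zero _ (by norm_num))]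
    beta_reduce
    rw [Finset.sum_congr rfl hterm, hpow, sub_mul, one_mul, mul_assoc, ← hall]
    ring

/-! ### Smooth cutoffs modulo units -/

/-- A finite product of absolutely convergent series is the series over the product index set. -/
lemma summable_tsum_pi_prod : ∀ {k : ℕ} {β : Fin k → Type} (f : ∀ i, β i → ℂ),
    (∀ i, Summable fun x => ‖f i x‖) →
    (Summable fun x : ∀ i, β i => ‖∏ i, f i (x i)‖) ∧
      ∑' x : ∀ i, β i, ∏ i, f i (x i) = ∏ i, ∑' x, f i x
  | 0, β, f, _ => by
    refine ⟨Summable.of_finite, ?_⟩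
    simp
  | k + 1, β, f, hf => by
    obtain ⟨h1, h2⟩ := summable_tsum_pi_prod (fun i : Fin k => f i.succ) fun i => hf i.succ
    have heq : ∀ p : β 0 × (∀ i : Fin k, β i.succ), ∏ i, f i (Fin.consEquiv β p i) =
        f 0 p.1 * ∏ i : Fin k, f i.succ (p.2 i) := fun p => by
      rw [Fin.prod_univ_succ]; simp [Fin.consEquiv]
    constructor
    · rw [← (Fin.consEquiv β).summable_iff]
      refine (Summable.mul_norm (f := f 0)
        (g := fun x : ∀ i : Fin k, β i.succ => ∏ i : Fin k, f i.succ (x i)) (hf 0) h1).congr ?_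
      intro p
      rw [Function.comp_apply, heq]
    · rw [← (Fin.consEquiv β).tsum_eq]
      rw [tsum_congr heq, Fin.prod_univ_succ, ← h2]
      exact (tsum_mul_tsum_of_summable_norm (f := f 0)
        (g := fun x : ∀ i : Fin k, β i.succ => ∏ i : Fin k, f i.succ (x i)) (hf 0) h1).symm

/-- A smooth compactly supported function whose integer translates sum to `1`. -/
noncomputable def intBump (y : ℝ) : ℝ := Real.smoothTransition (y + 1) - Real.smoothTransition y

lemma abs_le_one_of_intBump_ne_zero {y : ℝ} (hy : intBump y ≠ 0) : |y| ≤ 1 := by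
  contrapose! hy
  rcases lt_abs.mp hy with h | h
  · rw [intBump, Real.smoothTransition.one_of_one_le (by linarith),
      Real.smoothTransition.one_of_one_le h.le, sub_self]
  · rw [intBump, Real.smoothTransition.zero_of_nonpos (by linarith),
      Real.smoothTransition.zero_of_nonpos (by linarith), sub_self]

lemma hasSum_intBump (y : ℝ) : (Summable fun n : ℤ => ‖(intBump (n + y) : ℂ)‖) ∧
    ∑' n : ℤ, (intBump (n + y) : ℂ) = 1 := by
  have hz : ∀ n ∉ ({-⌊y⌋, -⌊y⌋ - 1} : Finset ℤ), (intBump (n + y) : ℂ) = 0 := by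
    intro n hn
    simp only [Finset.mem_insert, Finset.mem_singleton, not_or] at hn
    have h1 := Int.floor_le y
    have h2 := Int.lt_floor_add_one y
    rcases lt_or_ge n (-⌊y⌋ - 1) with h | h
    · have h' : (n : ℝ) ≤ -⌊y⌋ - 2 := by exact_mod_cast (by omega : n ≤ -⌊y⌋ - 2)
      rw [intBump, Real.smoothTransition.zero_of_nonpos (by linarith),
        Real.smoothTransition.zero_of_nonpos (by linarith)]
      simp
    · have h' : (-⌊y⌋ + 1 : ℝ) ≤ n := by exact_mod_cast (by omega : -⌊y⌋ + 1 ≤ n)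
      rw [intBump, Real.smoothTransition.one_of_one_le (by linarith),
        Real.smoothTransition.one_of_one_le (by linarith)]
      simp
  refine ⟨summable_of_ne_finset_zero (s := {-⌊y⌋, -⌊y⌋ - 1}) fun n hn => by
    rw [hz n hn, norm_zero], ?_⟩
  rw [tsum_eq_sum hz, Finset.sum_pair (by omega)]
  have h1 := Int.floor_le y
  have h2 := Int.lt_floor_add_one y
  rw [← Complex.ofReal_add, ← Complex.ofReal_one]
  congr 1
  push_cast
  rw [intBump, intBump, Real.smoothTransition.one_of_one_le (by linarith),
    show (-(⌊y⌋ : ℝ) - 1 + y + 1) = -⌊y⌋ + y by ring,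
    Real.smoothTransition.zero_of_nonpos (x := (-(⌊y⌋ : ℝ) - 1 + y)) (by linarith)]
  ring

section NumberField

open NumberField NumberField.mixedEmbedding NumberField.Units
  NumberField.Units.dirichletUnitTheorem NumberField.mixedEmbedding.fundamentalCone

variable (K : Type) [Field K] [NumberField K]

open scoped Classical in
/-- The real basis of the logarithmic space given by the fundamental units. -/
noncomputable def unitBasis : Module.Basis (Fin (rank K)) ℝ (logSpace K) :=
  (basisUnitLattice K).ofZLatticeBasis ℝ _

variable {K}

/-- A smooth cutoff replacing the indicator function of a fundamental domain for the units: it is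
degree-zero homogeneous where the norm is nonzero, and its unit translates sum to a constant. -/
noncomputable def unitCutoff (x : mixedSpace K) : ℂ :=
  ∏ i, (intBump ((unitBasis K).repr (logMap x) i) : ℂ)

open scoped Classical in
lemma unitBasis_repr_logEmbedding (ζ : torsion K) (n : Fin (rank K) → ℤ) (i : Fin (rank K)) :
    (unitBasis K).repr (logEmbedding K (Additive.ofMul
      ((ζ : (𝓞 K)ˣ) * ∏ i, (fundSystem K i) ^ (n i)))) i = n i := by
  have h0 : logEmbedding K (Additive.ofMul (ζ : (𝓞 K)ˣ)) = 0 :=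
    logEmbedding_eq_zero_iff.mpr ζ.2
  rw [ofMul_mul, map_add, h0, zero_add, ofMul_prod, map_sum]
  have h1 : ∀ j, logEmbedding K (Additive.ofMul (fundSystem K j ^ n j)) =
      (n j : ℝ) • unitBasis K j := by
    intro j
    rw [ofMul_zpow, map_zsmul, logEmbedding_fundSystem, unitBasis,
      Module.Basis.ofZLatticeBasis_apply, Int.cast_smul_eq_zsmul]
  simp_rw [h1]
  rw [(unitBasis K).repr_sum_self]

/-- Writing a unit as a root of unity times a product of powers of fundamental units turns the sum
over units into a product of sums of `intBump` over integer translates, times the number of roots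
of unity. -/
lemma hasSum_unitCutoff (x : mixedSpace K) (hx : mixedEmbedding.norm x ≠ 0) :
    HasSum (fun u : (𝓞 K)ˣ => unitCutoff (u • x)) (torsionOrder K) := by
  have : Fintype (torsion K) := Fintype.ofFinite _
  let E : torsion K × (Fin (rank K) → ℤ) ≃ (𝓞 K)ˣ :=
    Equiv.ofBijective (fun p => (p.1 : (𝓞 K)ˣ) * ∏ i, (fundSystem K i) ^ (p.2 i)) <| by
      rw [Function.bijective_iff_existsUnique]
      intro u
      obtain ⟨p, hp, huniq⟩ := exist_unique_eq_mul_prod K u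
      exact ⟨p, hp.symm, fun q hq => huniq q hq.symm⟩
  rw [← E.hasSum_iff]
  have hval : ∀ p, unitCutoff (E p • x) =
      1 * ∏ i, (intBump (p.2 i + (unitBasis K).repr (logMap x) i) : ℂ) := by
    intro p
    rw [one_mul, unitCutoff, logMap_unit_smul _ hx]
    refine Finset.prod_congr rfl fun i _ => ?_
    rw [map_add, Finsupp.add_apply]
    congr 3
    exact unitBasis_repr_logEmbedding p.1 p.2 i
  simp only [Function.comp_def, hval]
  obtain ⟨h1, h2⟩ := summable_tsum_pi_prod
    (fun i (n : ℤ) => (intBump (n + (unitBasis K).repr (logMap x) i) : ℂ))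
    fun i => (hasSum_intBump _).1
  simp only [(hasSum_intBump _).2, Finset.prod_const_one] at h2
  have hone : Summable fun _ : torsion K => ‖(1 : ℂ)‖ := Summable.of_finite
  have hs := (summable_mul_of_summable_norm hone h1).hasSum
  rwa [← tsum_mul_tsum_of_summable_norm hone h1, h2, mul_one, tsum_fintype, Finset.sum_const,
    Finset.card_univ, nsmul_one, ← Nat.card_eq_fintype_card] at hs

end NumberField

/-! ### The smoothed norm power -/

section NumberField

open NumberField NumberField.mixedEmbedding NumberField.Units
  NumberField.Units.dirichletUnitTheorem NumberField.mixedEmbedding.fundamentalCone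

variable {K : Type} [Field K] [NumberField K]

open scoped Classical in
/-- The smoothed summand `unitCutoff x * |N x| ^ (-s)`, set to `0` where the norm vanishes. -/
noncomputable def normPow (s : ℂ) (x : mixedSpace K) : ℂ :=
  if mixedEmbedding.norm x = 0 then 0
  else unitCutoff x * Complex.exp (-s * Real.log (mixedEmbedding.norm x))

lemma normPow_smul (s : ℂ) (R : ℝ) (hR : 0 < R) (x : mixedSpace K) :
    normPow s (R • x) = (R : ℂ) ^ (-((Module.finrank ℚ K : ℕ) * s)) * normPow s x := by
  have hN : mixedEmbedding.norm (R • x) = R ^ Module.finrank ℚ K * mixedEmbedding.norm x := by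
    rw [mixedEmbedding.norm_smul, abs_of_pos hR]
  have hRd : R ^ Module.finrank ℚ K ≠ 0 := (pow_pos hR _).ne'
  by_cases hx : mixedEmbedding.norm x = 0
  · simp [normPow, hN, hx]
  · rw [normPow, normPow, if_neg hx, if_neg (by rw [hN]; exact mul_ne_zero hRd hx), unitCutoff,
      logMap_real_smul hx hR.ne', ← unitCutoff, hN, Real.log_mul hRd hx, Real.log_pow,
      Complex.cpow_def_of_ne_zero (by exact_mod_cast hR.ne'), mul_left_comm, ← Complex.exp_add,
      ← Complex.ofReal_log hR.le]
    congr 2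
    push_cast
    ring

lemma differentiable_normPow (x : mixedSpace K) : Differentiable ℂ fun s => normPow s x := by
  unfold normPow
  split_ifs
  · exact differentiable_const _
  · fun_prop

open scoped Classical in
/-- On the support of the cutoff all archimedean absolute values of `x` are comparable, so the norm
is bounded below by a multiple of `‖x‖ ^ d`. -/
lemma exists_norm_ge_of_unitCutoff_ne_zero :
    ∃ c : ℝ, 0 < c ∧ ∀ x : mixedSpace K, mixedEmbedding.norm x ≠ 0 → unitCutoff x ≠ 0 →
      c * ‖x‖ ^ Module.finrank ℚ K ≤ mixedEmbedding.norm x := by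
  set d := Module.finrank ℚ K with hd
  have hdpos : (0 : ℝ) < d := by exact_mod_cast Module.finrank_pos
  let B₀ : ℝ := ∑ i, ‖unitBasis K i‖
  have hB₀ : 0 ≤ B₀ := Finset.sum_nonneg fun _ _ => norm_nonneg _
  let B₁ : ℝ := (Fintype.card (InfinitePlace K) + 1) * B₀
  have hB₁ : B₀ ≤ B₁ := by
    have : (0 : ℝ) ≤ Fintype.card (InfinitePlace K) * B₀ := by positivity
    simp only [B₁]; linarith
  refine ⟨Real.exp (-(d * B₁)), Real.exp_pos _, fun x hx hφ => ?_⟩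
  have hNpos : 0 < mixedEmbedding.norm x :=
    lt_of_le_of_ne (mixedEmbedding.norm_nonneg x) (Ne.symm hx)
  have hwpos : ∀ w, 0 < normAtPlace w x := fun w =>
    lt_of_le_of_ne (normAtPlace_nonneg w x) (Ne.symm (mixedEmbedding.norm_ne_zero_iff.mp hx w))
  have hcoord : ∀ i, |(unitBasis K).repr (logMap x) i| ≤ 1 := by
    intro i
    apply abs_le_one_of_intBump_ne_zero
    have := Finset.prod_ne_zero_iff.mp hφ i (Finset.mem_univ i)
    exact_mod_cast this
  have hlog : ‖logMap x‖ ≤ B₀ := by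
    rw [← (unitBasis K).sum_repr (logMap x)]
    refine (norm_sum_le _ _).trans (Finset.sum_le_sum fun i _ => ?_)
    rw [_root_.norm_smul]
    exact mul_le_of_le_one_left (norm_nonneg _) (hcoord i)
  set N := Real.log (mixedEmbedding.norm x) with hN
  have hlogw : ∀ w : {w : InfinitePlace K // w ≠ w₀}, |logMap x w| ≤ B₀ := fun w =>
    (norm_le_pi_norm (logMap x) w).trans hlog
  have hsum : ∑ w : InfinitePlace K, (w.mult : ℝ) * (Real.log (normAtPlace w x) - N * (d : ℝ)⁻¹)
      = 0 := by
    simp only [mul_sub, Finset.sum_sub_distrib]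
    rw [← Finset.sum_mul, ← Nat.cast_sum, InfinitePlace.sum_mult_eq, ← hd,
      hN, mixedEmbedding.norm_apply, Real.log_prod fun w _ => (pow_pos (hwpos w) _).ne']
    simp only [Real.log_pow]
    field_simp
    ring
  have hupper : ∀ w, Real.log (normAtPlace w x) - N * (d : ℝ)⁻¹ ≤ B₁ := by
    intro w
    have hm : (1 : ℝ) ≤ w.mult := by exact_mod_cast InfinitePlace.mult_pos
    set t := Real.log (normAtPlace w x) - N * (d : ℝ)⁻¹ with ht
    have hB₁0 : 0 ≤ B₁ := hB₀.trans hB₁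
    suffices h : (w.mult : ℝ) * t ≤ B₁ by nlinarith
    by_cases hw : w = w₀
    · -- the value at `w₀` is minus the sum of the others
      rw [← Finset.add_sum_erase _ _ (Finset.mem_univ w)] at hsum
      have h2 : ‖∑ v ∈ Finset.univ.erase w,
          ((v.mult : ℝ) * (Real.log (normAtPlace v x) - N * (d : ℝ)⁻¹))‖ ≤
          (Finset.univ.erase w).card • B₀ := by
        refine (norm_sum_le _ _).trans (Finset.sum_le_card_nsmul _ _ _ fun v hv => ?_)
        exact hlogw ⟨v, by rw [← hw]; exact Finset.ne_of_mem_erase hv⟩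
      have h3 : ((Finset.univ.erase w).card : ℝ) ≤ Fintype.card (InfinitePlace K) + 1 := by
        have := Finset.card_le_univ (Finset.univ.erase w)
        have : ((Finset.univ.erase w).card : ℝ) ≤ Fintype.card (InfinitePlace K) := by
          exact_mod_cast this
        linarith
      rw [nsmul_eq_mul] at h2
      have h4 := h2.trans (mul_le_mul_of_nonneg_right h3 hB₀)
      have h5 := (abs_le.mp h4).1
      simp only [B₁]
      linarith
    · exact (le_abs_self _).trans ((hlogw ⟨w, hw⟩).trans hB₁)
  have hle : ‖x‖ ≤ Real.exp (B₁ + N * (d : ℝ)⁻¹) := by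
    rw [norm_eq_sup'_normAtPlace]
    refine Finset.sup'_le _ _ fun w _ => ?_
    rw [← Real.log_le_iff_le_exp (hwpos w)]
    linarith [hupper w]
  calc Real.exp (-(d * B₁)) * ‖x‖ ^ d
      ≤ Real.exp (-(d * B₁)) * Real.exp (B₁ + N * (d : ℝ)⁻¹) ^ d := by gcongr
    _ = Real.exp N := by
        rw [← Real.exp_nat_mul, ← Real.exp_add]
        congr 1
        field_simp
        ring
    _ = _ := Real.exp_log hNpos

open scoped Classical in
lemma contDiffAt_normAtPlace {n : WithTop ℕ∞} (w : InfinitePlace K) (x : mixedSpace K)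
    (hx : normAtPlace w x ≠ 0) : ContDiffAt ℝ n (fun x : mixedSpace K => normAtPlace w x) x := by
  rcases w.isReal_or_isComplex with hw | hw
  · simp only [normAtPlace_apply_of_isReal hw] at hx ⊢
    have h1 : ContDiffAt ℝ n (fun x : mixedSpace K => x.1 ⟨w, hw⟩) x := by fun_prop
    exact (contDiffAt_norm ℝ (norm_ne_zero_iff.mp hx)).comp x h1
  · simp only [normAtPlace_apply_of_isComplex hw] at hx ⊢
    have h1 : ContDiffAt ℝ n (fun x : mixedSpace K => x.2 ⟨w, hw⟩) x := by fun_prop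
    exact (contDiffAt_norm ℂ (norm_ne_zero_iff.mp hx)).comp x h1

open scoped Classical in
lemma contDiffAt_mixedNorm {n : WithTop ℕ∞} (x : mixedSpace K)
    (hx : mixedEmbedding.norm x ≠ 0) :
    ContDiffAt ℝ n (fun x : mixedSpace K => mixedEmbedding.norm x) x := by
  simp only [mixedEmbedding.norm_apply]
  exact contDiffAt_prod fun w _ =>
    (contDiffAt_normAtPlace w x (mixedEmbedding.norm_ne_zero_iff.mp hx w)).pow _

lemma contDiff_intBump {n : ℕ} : ContDiff ℝ n intBump := by
  have h : ContDiff ℝ n Real.smoothTransition := Real.smoothTransition.contDiff (n := (n : ℕ∞))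
  exact (h.comp (contDiff_id.add contDiff_const)).sub h

open scoped Classical in
lemma contDiffAt_unitCutoff {n : ℕ} (x : mixedSpace K)
    (hx : mixedEmbedding.norm x ≠ 0) :
    ContDiffAt ℝ n (fun x : mixedSpace K => unitCutoff x) x := by
  have hlog : ContDiffAt ℝ n (fun x : mixedSpace K => logMap x) x := by
    rw [contDiffAt_pi]
    intro w
    simp only [logMap_apply]
    exact contDiffAt_const.mul (((contDiffAt_normAtPlace _ x
      (mixedEmbedding.norm_ne_zero_iff.mp hx _)).log
        (mixedEmbedding.norm_ne_zero_iff.mp hx _)).sub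
          (((contDiffAt_mixedNorm x hx).log hx).mul contDiffAt_const))
  refine contDiffAt_prod fun i _ => ?_
  have hlin : ContDiff ℝ n fun y : logSpace K => (unitBasis K).repr y i :=
    (LinearMap.toContinuousLinearMap ((unitBasis K).coord i)).contDiff
  exact Complex.ofRealCLM.contDiff.contDiffAt.comp x
    (contDiff_intBump.contDiffAt.comp x (hlin.contDiffAt.comp x hlog))

open scoped Classical in
/-- The summand is smooth outside the ball of radius `1 / 2`: there the support of the cutoff stays
at norm at least `δ > 0`, so a truncation near the norm-zero locus changes nothing. -/
lemma exists_contDiff_normPow (n : ℕ) : ∃ Φ : ℂ × mixedSpace K → ℂ, ContDiff ℝ n Φ ∧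
    ∀ s (x : mixedSpace K), 1 / 2 ≤ ‖x‖ → normPow s x = Φ (s, x) := by
  obtain ⟨c, hc, hle⟩ := exists_norm_ge_of_unitCutoff_ne_zero (K := K)
  set δ : ℝ := c * (1 / 2) ^ Module.finrank ℚ K with hδ
  have hδpos : 0 < δ := by positivity
  refine ⟨fun p => (Real.smoothTransition (2 * mixedEmbedding.norm p.2 / δ - 1) : ℂ) *
    normPow p.1 p.2, ?_, ?_⟩
  · rw [contDiff_iff_contDiffAt]
    rintro ⟨s₀, x₀⟩
    have hcont : Continuous fun p : ℂ × mixedSpace K => mixedEmbedding.norm p.2 :=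
      (mixedEmbedding.continuous_norm K).comp continuous_snd
    by_cases hx₀ : mixedEmbedding.norm x₀ = 0
    · -- the truncation vanishes where the norm is below `δ / 2`
      have hev : ∀ᶠ p : ℂ × mixedSpace K in 𝓝 (s₀, x₀), mixedEmbedding.norm p.2 < δ / 2 :=
        hcont.continuousAt.eventually_lt continuousAt_const (by simpa [hx₀] using hδpos)
      refine (contDiffAt_const (c := (0 : ℂ))).congr_of_eventuallyEq (hev.mono fun p hp => ?_)
      beta_reduce
      rw [Real.smoothTransition.zero_of_nonpos, Complex.ofReal_zero, zero_mul]
      rw [sub_nonpos, div_le_one hδpos]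
      linarith
    · have hev : ∀ᶠ p : ℂ × mixedSpace K in 𝓝 (s₀, x₀), mixedEmbedding.norm p.2 ≠ 0 :=
        hcont.continuousAt.eventually_ne hx₀
      have hN : ContDiffAt ℝ n (fun p : ℂ × mixedSpace K => mixedEmbedding.norm p.2) (s₀, x₀) :=
        (contDiffAt_mixedNorm x₀ hx₀).comp (s₀, x₀) contDiffAt_snd
      have hφ : ContDiffAt ℝ n (fun p : ℂ × mixedSpace K => unitCutoff p.2) (s₀, x₀) :=
        ContDiffAt.comp (g := fun x : mixedSpace K => unitCutoff x) (s₀, x₀)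
          (contDiffAt_unitCutoff x₀ hx₀) contDiffAt_snd
      have hT : ContDiff ℝ n Real.smoothTransition :=
        Real.smoothTransition.contDiff (n := (n : ℕ∞))
      have hsm : ContDiffAt ℝ n (fun p : ℂ × mixedSpace K =>
          (Real.smoothTransition (2 * mixedEmbedding.norm p.2 / δ - 1) : ℂ) *
          (unitCutoff p.2 * Complex.exp (-p.1 * (Real.log (mixedEmbedding.norm p.2) : ℂ))))
          (s₀, x₀) := by
        refine ContDiffAt.mul ?_ (hφ.mul ?_)
        · refine Complex.ofRealCLM.contDiff.contDiffAt.comp (s₀, x₀)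
            (hT.contDiffAt.comp (s₀, x₀) ?_)
          exact ((contDiffAt_const.mul hN).div_const δ).sub contDiffAt_const
        · refine Complex.contDiff_exp.contDiffAt.comp (s₀, x₀) (contDiffAt_fst.neg.mul ?_)
          exact Complex.ofRealCLM.contDiff.contDiffAt.comp (s₀, x₀) (hN.log hx₀)
      refine hsm.congr_of_eventuallyEq (hev.mono fun p hp => ?_)
      beta_reduce
      rw [normPow, if_neg hp]
  · intro s x hx
    beta_reduce
    by_cases hN : mixedEmbedding.norm x = 0
    · simp [normPow, hN]
    by_cases hφ : unitCutoff x = 0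
    · simp [normPow, hφ]
    have h1 : δ ≤ mixedEmbedding.norm x := by
      refine le_trans ?_ (hle x hN hφ)
      rw [hδ]; gcongr
    rw [Real.smoothTransition.one_of_one_le, Complex.ofReal_one, one_mul]
    rw [le_sub_iff_add_le, le_div_iff₀ hδpos]
    linarith

end NumberField

/-! ### Partial zeta functions -/

section NumberField

open NumberField NumberField.mixedEmbedding NumberField.Units
  NumberField.Units.dirichletUnitTheorem NumberField.mixedEmbedding.fundamentalCone
  nonZeroDivisors

variable {K : Type} [Field K] [NumberField K]

lemma mixedNorm_mixedEmbedding (a : 𝓞 K) :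
    mixedEmbedding.norm (mixedEmbedding K a) = (Ideal.absNorm (Ideal.span {a}) : ℝ) := by
  rw [mixedEmbedding.norm_eq_norm, Ideal.absNorm_span_singleton, ← Algebra.coe_norm_int,
    Nat.cast_natAbs]
  push_cast
  rfl

open scoped Classical in
lemma exists_idealLattice_continuation (𝔞 : (FractionalIdeal (𝓞 K)⁰ K)ˣ) :
    ∃ A : ℂ → ℂ, DifferentiableOn ℂ A {s | 0 < s.re} ∧ ∀ s : ℂ, 1 < s.re →
      (Summable fun a : idealLattice K 𝔞 => ‖normPow s (a : mixedSpace K)‖) ∧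
      (1 - (2 : ℂ) ^ ((Module.finrank ℚ K : ℕ) * (1 - s))) *
        ∑' a : idealLattice K 𝔞, normPow s (a : mixedSpace K) = A s := by
  obtain ⟨Φ, hΦ, hFΦ⟩ := exists_contDiff_normPow (K := K) (Module.finrank ℚ K)
  have hrank : Module.finrank ℤ (idealLattice K 𝔞) = Module.finrank ℚ K := by
    rw [ZLattice.rank ℝ, mixedEmbedding.finrank]
  exact lattice_sum_continuation (V := mixedSpace K) (idealLattice K 𝔞) (Module.finrank ℚ K)
    Module.finrank_pos hrank (normPow (K := K)) Φ
    (normPow_smul (K := K)) hΦ hFΦ (differentiable_normPow (K := K))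

/-- The ideals in the inverse class of `J` correspond, via `I ↦ I J = (γ I)`, to the nonzero elements
of `J` up to units. -/
lemma exists_generators_of_idealClass {R : Type} [CommRing R] [IsDedekindDomain R]
    (J : (Ideal R)⁰) :
    ∃ γ : {I : (Ideal R)⁰ // ClassGroup.mk0 I = (ClassGroup.mk0 J)⁻¹} → R,
      (∀ I, Ideal.span {γ I} = (I.1 : Ideal R) * (J : Ideal R)) ∧ (∀ I, γ I ∈ (J : Ideal R)) ∧
      (Function.Injective fun p : {I : (Ideal R)⁰ // ClassGroup.mk0 I = (ClassGroup.mk0 J)⁻¹} × Rˣ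
        => (p.2 : R) * γ p.1) ∧
      ∀ a ∈ (J : Ideal R), a ≠ 0 → ∃ I, ∃ u : Rˣ, (u : R) * γ I = a := by
  have hgen : ∀ I : {I : (Ideal R)⁰ // ClassGroup.mk0 I = (ClassGroup.mk0 J)⁻¹},
      ∃ x : R, x ≠ 0 ∧ (I.1 : Ideal R) * (J : Ideal R) = Ideal.span {x} := fun I =>
    ClassGroup.mk0_eq_mk0_inv_iff.mp I.2
  choose γ hγ0 hγ using hgen
  have hJ0 : (J : Ideal R) ≠ 0 := nonZeroDivisors.coe_ne_zero J
  refine ⟨γ, fun I => (hγ I).symm, fun I => ?_, ?_, ?_⟩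
  · have h : γ I ∈ (I.1 : Ideal R) * (J : Ideal R) := by
      rw [hγ I]
      exact Ideal.mem_span_singleton_self _
    have hle : (I.1 : Ideal R) * (J : Ideal R) ≤ (J : Ideal R) := Ideal.mul_le_right
    exact hle h
  · rintro ⟨I, u⟩ ⟨I', u'⟩ h
    beta_reduce at h
    have h2 : (I.1 : Ideal R) * J = (I'.1 : Ideal R) * J := by
      rw [hγ, hγ, ← Ideal.span_singleton_mul_left_unit u.isUnit, h,
        Ideal.span_singleton_mul_left_unit u'.isUnit]
    have h3 : I = I' := Subtype.ext (Subtype.ext (mul_right_cancel₀ hJ0 h2))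
    subst h3
    have h4 : (u : R) = u' := mul_right_cancel₀ (hγ0 I) h
    rw [Units.ext h4]
  · intro a ha ha0
    obtain ⟨I, hI⟩ := Ideal.dvd_iff_le.mpr ((Ideal.span_singleton_le_iff_mem _).mpr ha)
    have hI0 : I ∈ (Ideal R)⁰ := by
      refine mem_nonZeroDivisors_of_ne_zero ?_
      rintro rfl
      rw [mul_zero] at hI
      exact ha0 (Ideal.span_singleton_eq_bot.mp hI)
    have hcl : ClassGroup.mk0 (⟨I, hI0⟩ : (Ideal R)⁰) = (ClassGroup.mk0 J)⁻¹ :=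
      ClassGroup.mk0_eq_mk0_inv_iff.mpr ⟨a, ha0, by rw [hI]; exact mul_comm _ _⟩
    have hassoc : Ideal.span {γ ⟨⟨I, hI0⟩, hcl⟩} = Ideal.span {a} := by
      rw [← hγ, hI]; exact mul_comm _ _
    obtain ⟨u, hu⟩ := Ideal.span_singleton_eq_span_singleton.mp hassoc
    exact ⟨⟨⟨I, hI0⟩, hcl⟩, u, by rw [mul_comm, hu]⟩

/-- The partial zeta function of an ideal class. The lattice sum of `normPow` over `J`, grouped by
unit orbits, is `w N(J) ^ (-s)` times the partial zeta function, since the cutoff sums to the number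
`w` of roots of unity on each orbit. -/
lemma exists_idealClass_continuation (J : (Ideal (𝓞 K))⁰) :
    ∃ A : ℂ → ℂ, DifferentiableOn ℂ A {s | 0 < s.re} ∧ ∀ s : ℂ, 1 < s.re →
      (Summable fun I : {I : (Ideal (𝓞 K))⁰ // ClassGroup.mk0 I = (ClassGroup.mk0 J)⁻¹} =>
        ‖(Ideal.absNorm (I : Ideal (𝓞 K)) : ℂ) ^ (-s)‖) ∧
      (1 - (2 : ℂ) ^ ((Module.finrank ℚ K : ℕ) * (1 - s))) *
        ∑' I : {I : (Ideal (𝓞 K))⁰ // ClassGroup.mk0 I = (ClassGroup.mk0 J)⁻¹},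
          (Ideal.absNorm (I : Ideal (𝓞 K)) : ℂ) ^ (-s) = A s := by
  let T := {I : (Ideal (𝓞 K))⁰ // ClassGroup.mk0 I = (ClassGroup.mk0 J)⁻¹}
  let 𝔞 : (FractionalIdeal (𝓞 K)⁰ K)ˣ := FractionalIdeal.mk0 K J
  obtain ⟨A, hA, hAs⟩ := exists_idealLattice_continuation 𝔞
  obtain ⟨γ : T → 𝓞 K, hγ, hmemJ, hγinj, hγsurj⟩ := exists_generators_of_idealClass J
  have hJ0 : (J : Ideal (𝓞 K)) ≠ 0 := nonZeroDivisors.coe_ne_zero J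
  have hmem : ∀ a : 𝓞 K, a ∈ (J : Ideal (𝓞 K)) → mixedEmbedding K a ∈ idealLattice K 𝔞 := by
    intro a ha
    rw [mem_idealLattice]
    exact ⟨a, (FractionalIdeal.mem_coeIdeal _).mpr ⟨a, ha, rfl⟩, rfl⟩
  let e : T × (𝓞 K)ˣ → idealLattice K 𝔞 := fun p =>
    ⟨mixedEmbedding K ((p.2 * γ p.1 : 𝓞 K) : K), hmem _ (Ideal.mul_mem_left _ _ (hmemJ p.1))⟩
  have he : ∀ p, (e p : mixedSpace K) = p.2 • mixedEmbedding K (γ p.1 : K) := by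
    intro p
    rw [unitSMul_smul, ← map_mul]
    simp [e]
  have hinj : Function.Injective e := fun p q h =>
    hγinj (RingOfIntegers.coe_injective ((mixedEmbedding K).injective (Subtype.ext_iff.mp h)))
  have hnorm : ∀ I : T, mixedEmbedding.norm (mixedEmbedding K (γ I : K)) =
      ((Ideal.absNorm (I : Ideal (𝓞 K)) * Ideal.absNorm (J : Ideal (𝓞 K)) : ℕ) : ℝ) := by
    intro I
    rw [mixedNorm_mixedEmbedding, hγ, map_mul]
  have hIpos : ∀ I : T, Ideal.absNorm (I : Ideal (𝓞 K)) ≠ 0 := fun I => by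
    rw [Ne, Ideal.absNorm_eq_zero_iff]
    exact nonZeroDivisors.coe_ne_zero _
  have hJpos : Ideal.absNorm (J : Ideal (𝓞 K)) ≠ 0 := by
    rw [Ne, Ideal.absNorm_eq_zero_iff]
    exact hJ0
  have hN0 : ∀ I : T, mixedEmbedding.norm (mixedEmbedding K (γ I : K)) ≠ 0 := fun I => by
    rw [hnorm]
    exact_mod_cast mul_ne_zero (hIpos I) hJpos
  have hsupp : ∀ s, Function.support (fun a : idealLattice K 𝔞 => normPow s (a : mixedSpace K)) ⊆
      Set.range e := by
    rintro s ⟨x, hx⟩ hs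
    obtain ⟨y, hy, rfl⟩ := (mem_idealLattice K _).mp hx
    obtain ⟨a, ha, rfl⟩ := (FractionalIdeal.mem_coeIdeal _).mp hy
    have ha0 : a ≠ 0 := by
      rintro rfl
      apply hs
      simp [normPow]
    obtain ⟨I, u, rfl⟩ := hγsurj a ha ha0
    exact ⟨(I, u), rfl⟩
  have hterm : ∀ s p, normPow s (e p : mixedSpace K) =
      unitCutoff (p.2 • mixedEmbedding K (γ p.1 : K)) *
        ((Ideal.absNorm (p.1 : Ideal (𝓞 K)) : ℂ) ^ (-s) *
          (Ideal.absNorm (J : Ideal (𝓞 K)) : ℂ) ^ (-s)) := by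
    intro s p
    rw [he, normPow, mixedEmbedding.norm_unit_smul, if_neg (hN0 _), hnorm,
      ← Complex.natCast_mul_natCast_cpow, ← Nat.cast_mul,
      Complex.cpow_def_of_ne_zero (by exact_mod_cast mul_ne_zero (hIpos p.1) hJpos),
      Complex.ofReal_log (by positivity)]
    push_cast
    ring_nf
  have hw : (torsionOrder K : ℂ) ≠ 0 := by exact_mod_cast torsionOrder_ne_zero K
  have hJs : ∀ s : ℂ, (Ideal.absNorm (J : Ideal (𝓞 K)) : ℂ) ^ (-s) ≠ 0 := fun s => by
    rw [Complex.cpow_def_of_ne_zero (by exact_mod_cast hJpos)]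
    exact Complex.exp_ne_zero _
  refine ⟨fun s => (torsionOrder K * (Ideal.absNorm (J : Ideal (𝓞 K)) : ℂ) ^ (-s))⁻¹ * A s,
    ?_, fun s hs => ?_⟩
  · refine DifferentiableOn.mul (fun s _ => DifferentiableAt.differentiableWithinAt ?_) hA
    refine DifferentiableAt.inv ?_ (mul_ne_zero hw (hJs s))
    exact (differentiableAt_const _).mul
      (differentiableAt_id.neg.const_cpow (Or.inl (by exact_mod_cast hJpos)))
  obtain ⟨hsum, htsum⟩ := hAs s hs
  have hsum' : Summable fun p : T × (𝓞 K)ˣ => ‖normPow s (e p : mixedSpace K)‖ :=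
    hsum.comp_injective hinj
  have hinner : ∀ I : T, ∑' u : (𝓞 K)ˣ, normPow s (e (I, u) : mixedSpace K) =
      torsionOrder K * (Ideal.absNorm (J : Ideal (𝓞 K)) : ℂ) ^ (-s) *
        (Ideal.absNorm (I : Ideal (𝓞 K)) : ℂ) ^ (-s) := by
    intro I
    simp only [hterm]
    rw [tsum_mul_right, (hasSum_unitCutoff _ (hN0 I)).tsum_eq]
    ring
  have htot : ∑' a : idealLattice K 𝔞, normPow s (a : mixedSpace K) =
      torsionOrder K * (Ideal.absNorm (J : Ideal (𝓞 K)) : ℂ) ^ (-s) *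
        ∑' I : T, (Ideal.absNorm (I : Ideal (𝓞 K)) : ℂ) ^ (-s) := by
    rw [← hinj.tsum_eq (hsupp s), hsum'.of_norm.tsum_prod, ← tsum_mul_left]
    exact tsum_congr hinner
  constructor
  · have h1 : Summable fun I : T => ‖(torsionOrder K : ℂ) *
        (Ideal.absNorm (J : Ideal (𝓞 K)) : ℂ) ^ (-s)‖ *
          ‖(Ideal.absNorm (I : Ideal (𝓞 K)) : ℂ) ^ (-s)‖ := by
      refine Summable.of_nonneg_of_le (fun I => by positivity) (fun I => ?_) hsum'.prod
      rw [← norm_mul, ← hinner]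
      exact norm_tsum_le_tsum_norm (hsum'.prod_factor I)
    exact (summable_mul_left_iff (norm_ne_zero_iff.mpr (mul_ne_zero hw (hJs s)))).mp h1
  · beta_reduce
    rw [← htsum, htot]
    have hJs' := hJs s
    field_simp
    rfl

end NumberField

/-! ### Sums over ideals and the Dedekind zeta function -/

/-- The ideals of finite index; `Nat.card` is `0` on infinite quotients. -/
abbrev FinIdeal (S : Type) [CommRing S] : Type := {I : Ideal S // Nat.card (S ⧸ I) ≠ 0}

/-- The term `[S : I] ^ (-s)` of the zeta function of `S`. -/
noncomputable def idealPow {S : Type} [CommRing S] (s : ℂ) (I : Ideal S) : ℂ :=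
  (Nat.card (S ⧸ I) : ℂ) ^ (-s)

/-- Grouping ideals by index: an absolutely convergent sum over finite-index ideals is the Dirichlet
series of the ideal-counting function. -/
lemma lseries_idealCount {S : Type} [CommRing S] {s : ℂ}
    (h : Summable fun I : FinIdeal S => ‖idealPow s I.1‖) :
    LSeriesSummable (fun n => (Nat.card {I : Ideal S // Nat.card (S ⧸ I) = n} : ℂ)) s ∧
    LSeries (fun n => (Nat.card {I : Ideal S // Nat.card (S ⧸ I) = n} : ℂ)) s =
      ∑' I : FinIdeal S, idealPow s I.1 := by
  have h1 : Summable fun I : FinIdeal S => idealPow s I.1 := h.of_norm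
  let N : FinIdeal S → ℕ := fun I => Nat.card (S ⧸ I.1)
  have h2 : Summable fun p : Σ n, {I : FinIdeal S // N I = n} => idealPow s p.2.1.1 :=
    (Equiv.sigmaFiberEquiv N).summable_iff.mpr h1
  have hfib : ∀ n, ∑' I : {I : FinIdeal S // N I = n}, idealPow s I.1.1 =
      LSeries.term (fun n => (Nat.card {I : Ideal S // Nat.card (S ⧸ I) = n} : ℂ)) s n := by
    intro n
    have hc : ∀ I : {I : FinIdeal S // N I = n}, idealPow s I.1.1 = (n : ℂ) ^ (-s) := by
      rintro ⟨I, rfl⟩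
      rfl
    rw [tsum_congr hc, tsum_const, LSeries.term_def]
    rcases eq_or_ne n 0 with rfl | hn
    · have : IsEmpty {I : FinIdeal S // N I = 0} := ⟨fun I => I.1.2 I.2⟩
      simp
    · rw [if_neg hn, nsmul_eq_mul, Complex.cpow_neg, div_eq_mul_inv]
      congr 2
      refine Nat.card_congr ⟨fun I => ⟨I.1.1, I.2⟩, fun I => ⟨⟨I.1, by rw [I.2]; exact hn⟩, I.2⟩,
        fun _ => rfl, fun _ => rfl⟩
  constructor
  · exact h2.sigma.congr hfib
  · rw [LSeries, ← tsum_congr hfib, ← h2.tsum_sigma,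
      ← (Equiv.sigmaFiberEquiv N).tsum_eq (fun I : FinIdeal S => idealPow s I.1)]
    rfl

section NumberField

open NumberField nonZeroDivisors

variable (K : Type) [Field K] [NumberField K]

lemma exists_idealSum_continuation :
    ∃ A : ℂ → ℂ, DifferentiableOn ℂ A {s | 0 < s.re} ∧ ∀ s : ℂ, 1 < s.re →
      (Summable fun I : FinIdeal (𝓞 K) => ‖idealPow s I.1‖) ∧
      (1 - (2 : ℂ) ^ ((Module.finrank ℚ K : ℕ) * (1 - s))) *
        ∑' I : FinIdeal (𝓞 K), idealPow s I.1 = A s := by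
  have hrep : ∀ C : ClassGroup (𝓞 K), ∃ J : (Ideal (𝓞 K))⁰, (ClassGroup.mk0 J)⁻¹ = C := fun C => by
    obtain ⟨J, hJ⟩ := ClassGroup.mk0_surjective C⁻¹
    exact ⟨J, by rw [hJ, inv_inv]⟩
  have hcl : ∀ C : ClassGroup (𝓞 K), ∃ A : ℂ → ℂ, DifferentiableOn ℂ A {s | 0 < s.re} ∧
      ∀ s : ℂ, 1 < s.re →
      (Summable fun I : {I : (Ideal (𝓞 K))⁰ // ClassGroup.mk0 I = C} =>
        ‖(Ideal.absNorm (I : Ideal (𝓞 K)) : ℂ) ^ (-s)‖) ∧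
      (1 - (2 : ℂ) ^ ((Module.finrank ℚ K : ℕ) * (1 - s))) *
        ∑' I : {I : (Ideal (𝓞 K))⁰ // ClassGroup.mk0 I = C},
          (Ideal.absNorm (I : Ideal (𝓞 K)) : ℂ) ^ (-s) = A s := by
    intro C
    obtain ⟨J, rfl⟩ := hrep C
    exact exists_idealClass_continuation J
  choose A hA hAs using hcl
  refine ⟨fun s => ∑ C, A C s, DifferentiableOn.fun_sum fun C _ => hA C, fun s hs => ?_⟩
  have hiff : ∀ I : Ideal (𝓞 K), I ∈ (Ideal (𝓞 K))⁰ ↔ Nat.card (𝓞 K ⧸ I) ≠ 0 := by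
    intro I
    rw [mem_nonZeroDivisors_iff_ne_zero, ← Submodule.cardQuot_apply, ← Ideal.absNorm_apply, Ne, Ne,
      Ideal.absNorm_eq_zero_iff]
    rfl
  let e : (Σ C : ClassGroup (𝓞 K), {I : (Ideal (𝓞 K))⁰ // ClassGroup.mk0 I = C}) ≃ FinIdeal (𝓞 K) :=
    (Equiv.sigmaFiberEquiv (fun I : (Ideal (𝓞 K))⁰ => ClassGroup.mk0 I)).trans
      (Equiv.subtypeEquivRight hiff)
  have he : ∀ p, idealPow s (e p).1 = (Ideal.absNorm (p.2.1 : Ideal (𝓞 K)) : ℂ) ^ (-s) := by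
    intro p
    rw [idealPow, ← Submodule.cardQuot_apply, ← Ideal.absNorm_apply]
    rfl
  have hsum : Summable fun p : Σ C : ClassGroup (𝓞 K), {I : (Ideal (𝓞 K))⁰ // ClassGroup.mk0 I = C}
      => ‖(Ideal.absNorm (p.2.1 : Ideal (𝓞 K)) : ℂ) ^ (-s)‖ := by
    rw [summable_sigma_of_nonneg fun _ => norm_nonneg _]
    exact ⟨fun C => (hAs C s hs).1, Summable.of_finite⟩
  constructor
  · rw [← e.summable_iff]
    exact hsum.congr fun p => by rw [Function.comp_apply, he]
  · rw [← e.tsum_eq, tsum_congr he, hsum.of_norm.tsum_sigma, tsum_fintype, Finset.mul_sum]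
    exact Finset.sum_congr rfl fun C _ => (hAs C s hs).2

/-- The Dedekind zeta function is meromorphic on `Re s > 0` with a simple pole at `1`. The factor
`1 - 2 ^ (d (1 - s))` has a simple zero at `1`, so the pole has order at most one; that it is a pole
is the nonvanishing of the residue in the analytic class number formula. -/
lemma exists_dedekindZeta_meromorphic :
    ∃ Z : ℂ → ℂ, MeromorphicOn Z {s | 0 < s.re} ∧
      (∀ s : ℂ, 1 < s.re → (Summable fun I : FinIdeal (𝓞 K) => ‖idealPow s I.1‖) ∧
        Z s = ∑' I : FinIdeal (𝓞 K), idealPow s I.1) ∧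
      ∃ H : ℂ → ℂ, AnalyticAt ℂ H 1 ∧ H 1 ≠ 0 ∧ ∀ᶠ s in 𝓝[≠] (1 : ℂ), (s - 1) * Z s = H s := by
  obtain ⟨A, hA, hAs⟩ := exists_idealSum_continuation K
  set d : ℕ := Module.finrank ℚ K with hd
  have hdpos : 0 < d := Module.finrank_pos
  let D : ℂ → ℂ := fun s => 1 - (2 : ℂ) ^ ((d : ℂ) * (1 - s))
  have hDder : ∀ s, HasDerivAt D (d * Complex.log 2 * (2 : ℂ) ^ ((d : ℂ) * (1 - s))) s := by
    intro s
    have h1 : HasDerivAt (fun s : ℂ => (d : ℂ) * (1 - s)) (d * (-1)) s :=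
      ((hasDerivAt_id s).const_sub 1).const_mul _
    refine ((h1.const_cpow (c := 2) (Or.inl two_ne_zero)).const_sub 1).congr_deriv ?_
    ring
  have hDdiff : Differentiable ℂ D := fun s => (hDder s).differentiableAt
  have hopen : IsOpen {s : ℂ | 0 < s.re} := isOpen_lt continuous_const Complex.continuous_re
  have hD1 : D 1 = 0 := by simp [D]
  have hDne : ∀ s : ℂ, 1 < s.re → D s ≠ 0 := by
    intro s hs h0
    have h1 : (2 : ℂ) ^ ((d : ℂ) * (1 - s)) = 1 := (sub_eq_zero.mp h0).symm
    have h2 : ‖((2 : ℝ) : ℂ) ^ ((d : ℂ) * (1 - s))‖ = 1 := by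
      rw [Complex.ofReal_ofNat, h1, norm_one]
    rw [Complex.norm_cpow_eq_rpow_re_of_pos two_pos] at h2
    have h3 : (((d : ℂ) * (1 - s)).re) < 0 := by
      simp only [Complex.mul_re, Complex.natCast_re, Complex.sub_re, Complex.one_re,
        Complex.natCast_im, zero_mul, sub_zero]
      exact mul_neg_of_pos_of_neg (by exact_mod_cast hdpos) (by linarith)
    have := Real.rpow_lt_one_of_one_lt_of_neg (one_lt_two : (1 : ℝ) < 2) h3
    linarith
  have hAan : ∀ s : ℂ, 0 < s.re → AnalyticAt ℂ A s := fun s hs =>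
    hA.analyticAt (hopen.mem_nhds hs)
  -- the zero of `D` at `1` is simple
  let q : ℂ → ℂ := dslope D 1
  have hq : Differentiable ℂ q := by
    rw [← differentiableOn_univ]
    exact (Complex.differentiableOn_dslope univ_mem).mpr hDdiff.differentiableOn
  have hq1 : q 1 ≠ 0 := by
    simp only [q, dslope_same, (hDder 1).deriv]
    have : Complex.log 2 ≠ 0 := by
      rw [← Complex.ofReal_ofNat, ← Complex.ofReal_log two_pos.le]
      exact_mod_cast (Real.log_pos one_lt_two).ne'
    simp [this, hdpos.ne']
  have hDq : ∀ s, D s = (s - 1) * q s := by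
    intro s
    have := sub_smul_dslope D 1 s
    rw [hD1, sub_zero, smul_eq_mul] at this
    exact this.symm
  have hH : AnalyticAt ℂ (fun s => A s / q s) 1 :=
    (hAan 1 (by simp)).div (hq.analyticAt 1) hq1
  have hZH : ∀ s, s ≠ 1 → (s - 1) * (A s / D s) = A s / q s := by
    intro s hs
    rw [hDq]
    have : s - 1 ≠ 0 := sub_ne_zero.mpr hs
    field_simp
  have hZ : ∀ s : ℂ, 1 < s.re → A s / D s = ∑' I : FinIdeal (𝓞 K), idealPow s I.1 := by
    intro s hs
    rw [div_eq_iff (hDne s hs), ← (hAs s hs).2, mul_comm]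
  refine ⟨fun s => A s / D s, fun s hs => ((hAan s hs).meromorphicAt).div
    (hDdiff.analyticAt s).meromorphicAt, fun s hs => ⟨(hAs s hs).1, hZ s hs⟩,
    fun s => A s / q s, hH, ?_, ?_⟩
  · have hlim := tendsto_sub_one_mul_dedekindZeta_nhdsGT K
    have hofReal : Tendsto (fun s : ℝ => (s : ℂ)) (𝓝[>] 1) (𝓝 1) := by
      have : Tendsto (fun s : ℝ => (s : ℂ)) (𝓝 1) (𝓝 ((1 : ℝ) : ℂ)) :=
        Complex.continuous_ofReal.continuousAt
      rw [Complex.ofReal_one] at this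
      exact this.mono_left nhdsWithin_le_nhds
    have hlim2 : Tendsto (fun s : ℝ => A (s : ℂ) / q (s : ℂ)) (𝓝[>] 1) (𝓝 (A 1 / q 1)) :=
      hH.continuousAt.tendsto.comp hofReal
    have heq : ∀ᶠ s : ℝ in 𝓝[>] 1, ((s : ℂ) - 1) * dedekindZeta K s = A s / q s := by
      filter_upwards [self_mem_nhdsWithin] with s hs
      have hs1 : (1 : ℝ) < s := hs
      have hs' : 1 < (s : ℂ).re := by simpa using hs1
      rw [← hZH s (by exact_mod_cast hs1.ne'), hZ s hs', ← (lseries_idealCount (hAs s hs').1).2]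
      congr 1
    beta_reduce
    rw [tendsto_nhds_unique (hlim2.congr' (heq.mono fun _ h => h.symm)) hlim]
    exact_mod_cast dedekindZeta_residue_ne_zero K
  · filter_upwards [self_mem_nhdsWithin] with s hs
    exact hZH s hs

end NumberField

/-! ### Splitting off the primes dividing an integer -/

/-- Finite-index ideals supported at the primes dividing `m`: those containing a power of `m`. -/
abbrev PrimaryIdeal (S : Type) [CommRing S] (m : ℕ) : Type :=
  {I : FinIdeal S // ∃ k : ℕ, (m : S) ^ k ∈ I.1}

/-- Finite-index ideals modulo which `m` is invertible. -/
abbrev CoprimeIdeal (S : Type) [CommRing S] (m : ℕ) : Type :=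
  {I : FinIdeal S // ∃ r : S, 1 - (m : S) * r ∈ I.1}

lemma exists_smooth_mul_coprime (m : ℕ) : ∀ n : ℕ, n ≠ 0 →
    ∃ a b k : ℕ, n = a * b ∧ a ∣ m ^ k ∧ Nat.Coprime b m := by
  intro n
  induction n using Nat.strong_induction_on with
  | _ n ih =>
    intro hn
    by_cases hco : Nat.Coprime n m
    · exact ⟨1, n, 0, by simp, by simp, hco⟩
    · obtain ⟨n', hn'⟩ := Nat.gcd_dvd_left n m
      have hg0 : 0 < n.gcd m := Nat.gcd_pos_of_pos_left m (Nat.pos_of_ne_zero hn)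
      have hg : 1 < n.gcd m := lt_of_le_of_ne hg0 (Ne.symm hco)
      have hn'0 : n' ≠ 0 := by
        rintro rfl
        exact hn (by rw [hn', mul_zero])
      have hlt : n' < n := by
        calc n' = 1 * n' := (one_mul _).symm
          _ < n.gcd m * n' := Nat.mul_lt_mul_of_pos_right hg (Nat.pos_of_ne_zero hn'0)
          _ = n := hn'.symm
      obtain ⟨a, b, k, hab, hak, hb⟩ := ih n' hlt hn'0
      refine ⟨n.gcd m * a, b, k + 1, by rw [mul_assoc, ← hab]; exact hn', ?_, hb⟩
      rw [pow_succ']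
      exact Nat.mul_dvd_mul (Nat.gcd_dvd_right n m) hak

section Ring

variable {S : Type} [CommRing S]

lemma natCard_quotient_mem (I : Ideal S) : ((Nat.card (S ⧸ I) : ℕ) : S) ∈ I := by
  rw [← Ideal.Quotient.eq_zero_iff_mem, map_natCast]
  have h := card_nsmul_eq_zero' (x := (1 : S ⧸ I))
  rwa [nsmul_eq_mul, mul_one] at h

lemma natCard_quotient_inf {I J : Ideal S} (h : IsCoprime I J) :
    Nat.card (S ⧸ I ⊓ J) = Nat.card (S ⧸ I) * Nat.card (S ⧸ J) := by
  rw [Nat.card_congr (Ideal.quotientInfEquivQuotientProd I J h).toEquiv, Nat.card_prod]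

lemma isCoprime_primary_coprime {m : ℕ} {I J : Ideal S} (hI : ∃ k : ℕ, (m : S) ^ k ∈ I)
    (hJ : ∃ r : S, 1 - (m : S) * r ∈ J) : IsCoprime I J := by
  obtain ⟨k, hk⟩ := hI
  obtain ⟨r, hr⟩ := hJ
  rw [Ideal.isCoprime_iff_exists]
  refine ⟨(m * r) ^ k, ?_, 1 - (m * r) ^ k, ?_, by ring⟩
  · rw [mul_pow]
    exact Ideal.mul_mem_right _ _ hk
  · have h := sub_dvd_pow_sub_pow (1 : S) (m * r) k
    rw [one_pow] at h
    exact Ideal.mem_of_dvd _ h hr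

/-- Every finite-index ideal is uniquely the intersection of one containing a power of `m` and one
modulo which `m` is invertible. Existence: split the index `n` as `a b` with `a ∣ m ^ k` and `b` prime
to `m`, and take `I + (a)` and `I + (b)`. -/
lemma inf_bijective (m : ℕ) : Function.Bijective
    (fun p : PrimaryIdeal S m × CoprimeIdeal S m => (⟨p.1.1.1 ⊓ p.2.1.1, by
      rw [natCard_quotient_inf (isCoprime_primary_coprime p.1.2 p.2.2)]
      exact mul_ne_zero p.1.1.2 p.2.1.2⟩ : FinIdeal S)) := by
  constructor
  · rintro ⟨I, J⟩ ⟨I', J'⟩ h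
    have h0 : I.1.1 ⊓ J.1.1 = I'.1.1 ⊓ J'.1.1 := Subtype.ext_iff.mp h
    -- an ideal that is coprime to the other factor can be recovered from the intersection
    have key : ∀ {A B A' B' : Ideal S}, IsCoprime A' B → A ⊓ B = A' ⊓ B' → A ≤ A' := by
      intro A B A' B' hco hinf x hx
      obtain ⟨i, hi, j, hj, hij⟩ := Ideal.isCoprime_iff_exists.mp hco
      have h1 : x * j ∈ A' ⊓ B' := by
        rw [← hinf]
        exact ⟨Ideal.mul_mem_right _ _ hx, Ideal.mul_mem_left _ _ hj⟩
      rw [← mul_one x, ← hij, mul_add]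
      exact A'.add_mem (Ideal.mul_mem_left _ _ hi) h1.1
    have h0' : J.1.1 ⊓ I.1.1 = J'.1.1 ⊓ I'.1.1 := by rw [inf_comm, h0, inf_comm]
    have c1 := isCoprime_primary_coprime I.2 J'.2
    have c2 := isCoprime_primary_coprime I'.2 J.2
    have e1 : I.1.1 = I'.1.1 := le_antisymm (key c2 h0) (key c1 h0.symm)
    have e2 : J.1.1 = J'.1.1 := le_antisymm (key c1.symm h0') (key c2.symm h0'.symm)
    rw [Prod.mk.injEq]
    exact ⟨Subtype.ext (Subtype.ext e1), Subtype.ext (Subtype.ext e2)⟩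
  · intro I
    obtain ⟨a, b, k, hab, hak, hb⟩ := exists_smooth_mul_coprime m _ I.2
    have hmem : ((a : S) * b) ∈ I.1 := by
      rw [← Nat.cast_mul, ← hab]
      exact natCard_quotient_mem I.1
    let A : Ideal S := I.1 ⊔ Ideal.span {(a : S)}
    let B : Ideal S := I.1 ⊔ Ideal.span {(b : S)}
    have haA : (a : S) ∈ A := Ideal.mem_sup_right (Ideal.mem_span_singleton_self _)
    have hbB : (b : S) ∈ B := Ideal.mem_sup_right (Ideal.mem_span_singleton_self _)
    have hA : ∃ k : ℕ, (m : S) ^ k ∈ A := by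
      refine ⟨k, Ideal.mem_of_dvd _ ?_ haA⟩
      rw [← Nat.cast_pow]
      exact Nat.cast_dvd_cast hak
    have hB : ∃ r : S, 1 - (m : S) * r ∈ B := by
      have hbez := Nat.isCoprime_iff_coprime.mpr hb
      obtain ⟨u, v, huv⟩ := hbez
      refine ⟨(v : S), ?_⟩
      have h1 : ((u : S) * b + v * m) = 1 := by exact_mod_cast congrArg (Int.cast : ℤ → S) huv
      have h2 : (1 : S) - m * v = u * b := by rw [← h1]; ring
      rw [h2]
      exact Ideal.mul_mem_left _ _ hbB
    have hco := isCoprime_primary_coprime hA hB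
    have hinf : A ⊓ B = I.1 := by
      refine le_antisymm ?_ (le_inf le_sup_left le_sup_left)
      rw [← Ideal.mul_eq_inf_of_isCoprime hco, Ideal.mul_le]
      intro x hx y hy
      obtain ⟨i, hi, c, hc, rfl⟩ := Submodule.mem_sup.mp hx
      obtain ⟨j, hj, d, hd, rfl⟩ := Submodule.mem_sup.mp hy
      obtain ⟨c', rfl⟩ := Ideal.mem_span_singleton'.mp hc
      obtain ⟨d', rfl⟩ := Ideal.mem_span_singleton'.mp hd
      have h1 : (i + c' * a) * (j + d' * b) = (j + d' * b) * i + c' * a * j + c' * d' * (a * b) := by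
        ring
      rw [h1]
      exact I.1.add_mem (I.1.add_mem (Ideal.mul_mem_left _ _ hi) (Ideal.mul_mem_left _ _ hj))
        (Ideal.mul_mem_left _ _ hmem)
    have hne : Nat.card (S ⧸ A) * Nat.card (S ⧸ B) ≠ 0 := by
      rw [← natCard_quotient_inf hco, hinf]
      exact I.2
    exact ⟨(⟨⟨A, left_ne_zero_of_mul hne⟩, hA⟩, ⟨⟨B, right_ne_zero_of_mul hne⟩, hB⟩),
      Subtype.ext hinf⟩

/-- The zeta function is the product of its part at `m` and its part prime to `m`. -/
lemma idealSum_eq_mul (m : ℕ) {s : ℂ} (h1 : Summable fun I : PrimaryIdeal S m => ‖idealPow s I.1.1‖)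
    (h2 : Summable fun I : CoprimeIdeal S m => ‖idealPow s I.1.1‖) :
    (Summable fun I : FinIdeal S => ‖idealPow s I.1‖) ∧
    ∑' I : FinIdeal S, idealPow s I.1 =
      (∑' I : PrimaryIdeal S m, idealPow s I.1.1) * ∑' I : CoprimeIdeal S m, idealPow s I.1.1 := by
  let e : PrimaryIdeal S m × CoprimeIdeal S m ≃ FinIdeal S :=
    Equiv.ofBijective _ (inf_bijective (S := S) m)
  have he : ∀ p, idealPow s (e p).1 = idealPow s p.1.1.1 * idealPow s p.2.1.1 := by
    intro p
    have : Nat.card (S ⧸ (e p).1) = Nat.card (S ⧸ p.1.1.1) * Nat.card (S ⧸ p.2.1.1) :=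
      natCard_quotient_inf (isCoprime_primary_coprime p.1.2 p.2.2)
    rw [idealPow, this, Nat.cast_mul, Complex.natCast_mul_natCast_cpow, idealPow, idealPow]
  constructor
  · rw [← e.summable_iff]
    exact (h1.mul_norm h2).congr fun p => by rw [Function.comp_apply, he]
  · rw [← e.tsum_eq, tsum_congr he, tsum_mul_tsum_of_summable_norm h1 h2]

end Ring

section Comparison

variable {R O : Type} [CommRing R] [CommRing O] {φ : R →+* O} {m : ℕ}

/-- The conductor property passes to extended ideals: `m J O ⊆ φ(J)`. -/
lemma mul_mem_map (hm : ∀ y : O, ∃ r : R, φ r = m * y) (J : Ideal R) {y : O}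
    (hy : y ∈ J.map φ) : ∃ r ∈ J, φ r = m * y := by
  suffices h : ∀ a : O, ∃ r ∈ J, φ r = m * (a * y) by simpa using h 1
  induction hy using Submodule.span_induction with
  | mem x hx =>
    obtain ⟨j, hj, rfl⟩ := hx
    intro a
    obtain ⟨t, ht⟩ := hm a
    exact ⟨t * j, Ideal.mul_mem_left _ _ hj, by rw [map_mul, ht]; ring⟩
  | zero => exact fun a => ⟨0, J.zero_mem, by simp⟩
  | add x y _ _ hx hy =>
    intro a
    obtain ⟨r, hr, hr'⟩ := hx a
    obtain ⟨t, ht, ht'⟩ := hy a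
    exact ⟨r + t, J.add_mem hr ht, by rw [map_add, hr', ht']; ring⟩
  | smul b x _ hx =>
    intro a
    obtain ⟨r, hr, hr'⟩ := hx (a * b)
    exact ⟨r, hr, by rw [hr', smul_eq_mul, mul_assoc]⟩

/-- If `m` is invertible modulo `I` then `R → O / I` is onto, because `m O ⊆ φ(R)`. -/
lemma natCard_quotient_comap (hm : ∀ y : O, ∃ r : R, φ r = m * y) {I : Ideal O}
    (hI : ∃ r : O, 1 - (m : O) * r ∈ I) :
    Nat.card (R ⧸ I.comap φ) = Nat.card (O ⧸ I) := by
  obtain ⟨w, hw⟩ := hI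
  have hsurj : Function.Surjective ((Ideal.Quotient.mk I).comp φ) := by
    intro x
    obtain ⟨y, rfl⟩ := Ideal.Quotient.mk_surjective x
    obtain ⟨r, hr⟩ := hm (w * y)
    refine ⟨r, ?_⟩
    rw [RingHom.comp_apply, hr, eq_comm, Ideal.Quotient.eq]
    have : y - m * (w * y) = y * (1 - m * w) := by ring
    rw [this]
    exact Ideal.mul_mem_left _ _ hw
  have hker : RingHom.ker ((Ideal.Quotient.mk I).comp φ) = I.comap φ := by
    rw [← RingHom.comap_ker, Ideal.mk_ker]
  rw [← hker]
  exact Nat.card_congr (RingHom.quotientKerEquivOfSurjective hsurj).toEquiv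

/-- Away from the conductor `m` the rings `R` and `O` have the same ideals with the same indices. -/
lemma comap_bijective (hφ : Function.Injective φ) (hm : ∀ y : O, ∃ r : R, φ r = m * y) :
    ∃ e : CoprimeIdeal O m ≃ CoprimeIdeal R m, ∀ I, Nat.card (R ⧸ (e I).1.1) =
      Nat.card (O ⧸ I.1.1) := by
  let c : CoprimeIdeal O m → CoprimeIdeal R m := fun I =>
    ⟨⟨I.1.1.comap φ, by rw [natCard_quotient_comap hm I.2]; exact I.1.2⟩, by
      obtain ⟨w, hw⟩ := I.2
      obtain ⟨r, hr⟩ := hm (w * w)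
      refine ⟨r, ?_⟩
      rw [Ideal.mem_comap, map_sub, map_one, map_mul, hr, map_natCast]
      have : (1 : O) - m * (m * (w * w)) = (1 + m * w) * (1 - m * w) := by ring
      rw [this]
      exact Ideal.mul_mem_left _ _ hw⟩
  have hc : Function.Bijective c := by
    constructor
    · have key : ∀ I I' : CoprimeIdeal O m, I.1.1.comap φ = I'.1.1.comap φ → I.1.1 ≤ I'.1.1 := by
        intro I I' h y hy
        obtain ⟨r, hr⟩ := hm y
        obtain ⟨w, hw⟩ := I'.2
        have h1 : r ∈ I'.1.1.comap φ := by
          rw [← h, Ideal.mem_comap, hr]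
          exact Ideal.mul_mem_left _ _ hy
        rw [Ideal.mem_comap, hr] at h1
        have h2 : y = y * (1 - m * w) + w * (m * y) := by ring
        rw [h2]
        exact I'.1.1.add_mem (Ideal.mul_mem_left _ _ hw) (Ideal.mul_mem_left _ _ h1)
      intro I I' h
      have h0 : I.1.1.comap φ = I'.1.1.comap φ := congrArg (fun J : CoprimeIdeal R m => J.1.1) h
      exact Subtype.ext (Subtype.ext (le_antisymm (key I I' h0) (key I' I h0.symm)))
    · intro J
      have hco : ∃ r : O, 1 - (m : O) * r ∈ J.1.1.map φ := by
        obtain ⟨r, hr⟩ := J.2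
        exact ⟨φ r, by simpa using Ideal.mem_map_of_mem φ hr⟩
      have hcomap : (J.1.1.map φ).comap φ = J.1.1 := by
        refine le_antisymm (fun x hx => ?_) Ideal.le_comap_map
        obtain ⟨r, hr, hrx⟩ := mul_mem_map hm J.1.1 (Ideal.mem_comap.mp hx)
        have h1 : r = m * x := hφ (by rw [hrx, map_mul, map_natCast])
        obtain ⟨w, hw⟩ := J.2
        have h2 : x = x * (1 - m * w) + w * (m * x) := by ring
        rw [h2, ← h1]
        exact J.1.1.add_mem (Ideal.mul_mem_left _ _ hw) (Ideal.mul_mem_left _ _ hr)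
      have hne : Nat.card (O ⧸ J.1.1.map φ) ≠ 0 := by
        rw [← natCard_quotient_comap hm hco, hcomap]
        exact J.1.2
      exact ⟨⟨⟨J.1.1.map φ, hne⟩, hco⟩, Subtype.ext (Subtype.ext hcomap)⟩
  exact ⟨Equiv.ofBijective c hc, fun I => natCard_quotient_comap hm I.2⟩

end Comparison

/-! ### Products of rings -/

section Pi

variable {k : ℕ} {A : Fin k → Type} [∀ i, CommRing (A i)]

lemma natCard_quotient_pi (I : ∀ i, Ideal (A i)) :
    Nat.card ((∀ i, A i) ⧸ Ideal.pi I) = ∏ i, Nat.card (A i ⧸ I i) := by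
  let q : (∀ i, A i) →+* ∀ i, A i ⧸ I i :=
    RingHom.pi fun i => (Ideal.Quotient.mk (I i)).comp (Pi.evalRingHom A i)
  have hq : ∀ x i, q x i = Ideal.Quotient.mk (I i) (x i) := fun _ _ => rfl
  have hsurj : Function.Surjective q := by
    intro y
    choose x hx using fun i => Ideal.Quotient.mk_surjective (y i)
    exact ⟨x, funext fun i => hx i⟩
  have hker : RingHom.ker q = Ideal.pi I := by
    ext x
    rw [RingHom.mem_ker, Ideal.mem_pi, funext_iff]
    simp only [hq, Pi.zero_apply, Ideal.Quotient.eq_zero_iff_mem]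
  rw [← hker, Nat.card_congr (RingHom.quotientKerEquivOfSurjective hsurj).toEquiv, Nat.card_pi]

lemma idealPow_pi (s : ℂ) (I : ∀ i, Ideal (A i)) :
    idealPow s (Ideal.pi I) = ∏ i, idealPow s (I i) := by
  simp only [idealPow, natCard_quotient_pi]
  exact map_prod (⟨⟨fun n : ℕ => (n : ℂ) ^ (-s), by simp⟩, fun a b => by
    simp [Complex.natCast_mul_natCast_cpow]⟩ : ℕ →* ℂ) _ _

/-- Finite-index ideals of a finite product of rings are products of finite-index ideals. -/
lemma exists_equiv_finIdeal_pi : ∃ e : (∀ i, FinIdeal (A i)) ≃ FinIdeal (∀ i, A i),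
    ∀ I, (e I).1 = Ideal.pi fun i => (I i).1 := by
  let c : (∀ i, FinIdeal (A i)) → FinIdeal (∀ i, A i) := fun I =>
    ⟨Ideal.pi fun i => (I i).1, by
      rw [natCard_quotient_pi]
      exact Finset.prod_ne_zero_iff.mpr fun i _ => (I i).2⟩
  refine ⟨Equiv.ofBijective c ⟨fun I I' h => ?_, fun I => ?_⟩, fun I => rfl⟩
  · have h0 : (Ideal.pi fun i => (I i).1) = Ideal.pi fun i => (I' i).1 := Subtype.ext_iff.mp h
    have h1 := (Ideal.piOrderIso (R := A)).symm.injective h0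
    exact funext fun i => Subtype.ext (congrFun h1 i)
  · obtain ⟨J, hJ⟩ := (Ideal.piOrderIso (R := A)).symm.surjective I.1
    have hJ' : Ideal.pi J = I.1 := hJ
    have hne : ∏ i, Nat.card (A i ⧸ J i) ≠ 0 := by
      rw [← natCard_quotient_pi, hJ']
      exact I.2
    exact ⟨fun i => ⟨J i, Finset.prod_ne_zero_iff.mp hne i (Finset.mem_univ i)⟩, Subtype.ext hJ'⟩

lemma exists_equiv_primaryIdeal_pi (m : ℕ) :
    ∃ e : (∀ i, PrimaryIdeal (A i) m) ≃ PrimaryIdeal (∀ i, A i) m,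
      ∀ I, (e I).1.1 = Ideal.pi fun i => (I i).1.1 := by
  obtain ⟨e, he⟩ := exists_equiv_finIdeal_pi (A := A)
  have hiff : ∀ I : ∀ i, FinIdeal (A i), (∀ i, ∃ n : ℕ, (m : A i) ^ n ∈ (I i).1) ↔
      ∃ n : ℕ, (m : ∀ i, A i) ^ n ∈ (e I).1 := by
    intro I
    simp only [he, Ideal.mem_pi, Pi.pow_apply, Pi.natCast_apply]
    constructor
    · intro h
      choose n hn using h
      exact ⟨∑ i, n i, fun i => Ideal.mem_of_dvd _
        (pow_dvd_pow _ (Finset.single_le_sum (fun _ _ => Nat.zero_le _) (Finset.mem_univ i)))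
        (hn i)⟩
    · rintro ⟨n, hn⟩ i
      exact ⟨n, hn i⟩
  let e' : (∀ i, PrimaryIdeal (A i) m) ≃
      {I : ∀ i, FinIdeal (A i) // ∀ i, ∃ n : ℕ, (m : A i) ^ n ∈ (I i).1} :=
    Equiv.subtypePiEquivPi.symm
  exact ⟨e'.trans (e.subtypeEquiv hiff), fun I => he _⟩

lemma idealSum_pi {s : ℂ} (h : ∀ i, Summable fun I : FinIdeal (A i) => ‖idealPow s I.1‖) :
    (Summable fun I : FinIdeal (∀ i, A i) => ‖idealPow s I.1‖) ∧
    ∑' I : FinIdeal (∀ i, A i), idealPow s I.1 = ∏ i, ∑' I : FinIdeal (A i), idealPow s I.1 := by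
  obtain ⟨e, he⟩ := exists_equiv_finIdeal_pi (A := A)
  obtain ⟨h1, h2⟩ := summable_tsum_pi_prod (fun i (I : FinIdeal (A i)) => idealPow s I.1) h
  have he' : ∀ I, idealPow s (e I).1 = ∏ i, idealPow s (I i).1 := fun I => by
    rw [he, idealPow_pi]
  constructor
  · rw [← e.summable_iff]
    exact h1.congr fun I => by rw [Function.comp_apply, he']
  · rw [← e.tsum_eq, tsum_congr he', h2]

lemma primarySum_pi {m : ℕ} {s : ℂ}
    (h : ∀ i, Summable fun I : PrimaryIdeal (A i) m => ‖idealPow s I.1.1‖) :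
    (Summable fun I : PrimaryIdeal (∀ i, A i) m => ‖idealPow s I.1.1‖) ∧
    ∑' I : PrimaryIdeal (∀ i, A i) m, idealPow s I.1.1 =
      ∏ i, ∑' I : PrimaryIdeal (A i) m, idealPow s I.1.1 := by
  obtain ⟨e, he⟩ := exists_equiv_primaryIdeal_pi (A := A) m
  obtain ⟨h1, h2⟩ := summable_tsum_pi_prod (fun i (I : PrimaryIdeal (A i) m) => idealPow s I.1.1) h
  have he' : ∀ I, idealPow s (e I).1.1 = ∏ i, idealPow s (I i).1.1 := fun I => by
    rw [he, idealPow_pi]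
  constructor
  · rw [← e.summable_iff]
    exact h1.congr fun I => by rw [Function.comp_apply, he']
  · rw [← e.tsum_eq, tsum_congr he', h2]

end Pi

/-! ### The part at `m` for rings of integers -/

section Dedekind

open NumberField UniqueFactorizationMonoid

variable (K : Type) [Field K] [NumberField K]

lemma natCard_quotient_eq_absNorm (I : Ideal (𝓞 K)) : Nat.card (𝓞 K ⧸ I) = Ideal.absNorm I := by
  rw [← Submodule.cardQuot_apply, ← Ideal.absNorm_apply]

/-- In a ring of integers, the ideals containing a power of `m` are the monomials in the finitely many
primes dividing `m`. -/
lemma exists_primaryIdeal_equiv {m : ℕ} (hm : m ≠ 0) :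
    ∃ (n : ℕ) (𝔭 : Fin n → Ideal (𝓞 K)) (e : (Fin n → ℕ) ≃ PrimaryIdeal (𝓞 K) m),
      (∀ j, 2 ≤ Ideal.absNorm (𝔭 j)) ∧ ∀ x, (e x).1.1 = ∏ j, 𝔭 j ^ x j := by
  classical
  have hm0 : Ideal.span {(m : 𝓞 K)} ≠ 0 := by
    rw [Ne, Ideal.zero_eq_bot, Ideal.span_singleton_eq_bot]
    exact_mod_cast hm
  let P : Finset (Ideal (𝓞 K)) := (normalizedFactors (Ideal.span {(m : 𝓞 K)})).toFinset
  have hP : ∀ p : P, Prime p.1 := fun p => prime_of_normalized_factor _ (Multiset.mem_toFinset.mp p.2)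
  have hPm : ∀ p : P, (m : 𝓞 K) ∈ p.1 := fun p => by
    rw [← Ideal.dvd_span_singleton]
    exact dvd_of_mem_normalizedFactors (Multiset.mem_toFinset.mp p.2)
  let 𝔭 : Fin P.card → Ideal (𝓞 K) := fun j => (P.equivFin.symm j).1
  have h𝔭inj : Function.Injective 𝔭 := Subtype.val_injective.comp P.equivFin.symm.injective
  have h𝔭 : ∀ j, Prime (𝔭 j) := fun j => hP _
  have hcard0 : ∀ I : Ideal (𝓞 K), Nat.card (𝓞 K ⧸ I) ≠ 0 ↔ I ≠ 0 := fun I => by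
    rw [natCard_quotient_eq_absNorm, Ne, Ideal.absNorm_eq_zero_iff]
    rfl
  have hprod0 : ∀ x : Fin P.card → ℕ, ∏ j, 𝔭 j ^ x j ≠ 0 := fun x =>
    Finset.prod_ne_zero_iff.mpr fun j _ => pow_ne_zero _ (h𝔭 j).ne_zero
  let c : (Fin P.card → ℕ) → PrimaryIdeal (𝓞 K) m := fun x =>
    ⟨⟨∏ j, 𝔭 j ^ x j, (hcard0 _).mpr (hprod0 x)⟩, ∑ j, x j, by
      rw [← Finset.prod_pow_eq_pow_sum]
      exact Ideal.prod_mem_prod fun j _ => Ideal.pow_mem_pow (hPm _) _⟩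
  refine ⟨P.card, 𝔭, Equiv.ofBijective c ⟨fun x y h => ?_, fun I => ?_⟩, fun j => ?_, fun x => rfl⟩
  · have h0 : ∏ j, 𝔭 j ^ x j = ∏ j, 𝔭 j ^ y j := congrArg (fun J : PrimaryIdeal (𝓞 K) m => J.1.1) h
    have hcount : ∀ (x : Fin P.card → ℕ) i,
        (normalizedFactors (∏ j, 𝔭 j ^ x j)).count (𝔭 i) = x i := by
      intro x i
      have hsum : ∀ t : Finset (Fin P.card), normalizedFactors (∏ j ∈ t, 𝔭 j ^ x j) =
          ∑ j ∈ t, normalizedFactors (𝔭 j ^ x j) := by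
        intro t
        induction t using Finset.induction_on with
        | empty => rw [Finset.prod_empty, Finset.sum_empty, normalizedFactors_one]
        | insert a t ha ih =>
          rw [Finset.prod_insert ha, Finset.sum_insert ha, normalizedFactors_mul
            (pow_ne_zero _ (h𝔭 a).ne_zero)
            (Finset.prod_ne_zero_iff.mpr fun j _ => pow_ne_zero _ (h𝔭 j).ne_zero), ih]
      rw [hsum, Multiset.count_sum']
      rw [Finset.sum_eq_single i]
      · rw [normalizedFactors_pow, normalizedFactors_irreducible (h𝔭 i).irreducible,
          normalize_eq, Multiset.count_nsmul, Multiset.count_singleton_self, mul_one]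
      · intro j _ hji
        rw [normalizedFactors_pow, normalizedFactors_irreducible (h𝔭 j).irreducible,
          normalize_eq, Multiset.count_nsmul, Multiset.count_singleton,
          if_neg fun h => hji (h𝔭inj h).symm, mul_zero]
      · simp
    funext i
    rw [← hcount x i, h0, hcount]
  · have hI0 : I.1.1 ≠ 0 := (hcard0 _).mp I.1.2
    obtain ⟨n, hn⟩ := I.2
    have hsub : (normalizedFactors I.1.1).toFinset ⊆ P := by
      intro p hp
      rw [Multiset.mem_toFinset] at hp
      have hpp := prime_of_normalized_factor p hp
      have h1 : p ∣ Ideal.span {(m : 𝓞 K)} ^ n := by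
        refine (dvd_of_mem_normalizedFactors hp).trans ?_
        rw [Ideal.span_singleton_pow, Ideal.dvd_span_singleton]
        exact hn
      have h2 := hpp.dvd_of_dvd_pow h1
      obtain ⟨q, hq, hpq⟩ := exists_mem_normalizedFactors_of_dvd hm0 hpp.irreducible h2
      rw [associated_iff_eq] at hpq
      rw [Multiset.mem_toFinset, hpq]
      exact hq
    refine ⟨fun j => (normalizedFactors I.1.1).count (𝔭 j), Subtype.ext (Subtype.ext ?_)⟩
    change ∏ j, 𝔭 j ^ (normalizedFactors I.1.1).count (𝔭 j) = I.1.1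
    have h3 : I.1.1 = (normalizedFactors I.1.1).prod :=
      (associated_iff_eq.mp (prod_normalizedFactors hI0)).symm
    conv_rhs => rw [h3, Finset.prod_multiset_count_of_subset _ P hsub, ← Finset.prod_coe_sort,
      ← P.equivFin.symm.prod_comp]
  · have h1 : Ideal.absNorm (𝔭 j) ≠ 0 := by
      rw [Ne, Ideal.absNorm_eq_zero_iff]
      exact (h𝔭 j).ne_zero
    have h2 : Ideal.absNorm (𝔭 j) ≠ 1 := by
      rw [Ne, Ideal.absNorm_eq_one_iff]
      exact fun h => (h𝔭 j).not_isUnit (Ideal.isUnit_iff.mpr h)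
    omega

/-- For a ring of integers the part of the zeta function at `m` is a finite product of geometric
series, so it converges and has no zeros on `Re s > 0`. -/
lemma primarySum_ringOfIntegers {m : ℕ} (hm : m ≠ 0) {s : ℂ} (hs : 0 < s.re) :
    (Summable fun I : PrimaryIdeal (𝓞 K) m => ‖idealPow s I.1.1‖) ∧
      ∑' I : PrimaryIdeal (𝓞 K) m, idealPow s I.1.1 ≠ 0 := by
  obtain ⟨n, 𝔭, e, h𝔭, he⟩ := exists_primaryIdeal_equiv K hm
  have hlt : ∀ j, ‖(Ideal.absNorm (𝔭 j) : ℂ) ^ (-s)‖ < 1 := by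
    intro j
    have h2 := h𝔭 j
    rw [Complex.norm_natCast_cpow_of_pos (by omega)]
    exact Real.rpow_lt_one_of_one_lt_of_neg (by exact_mod_cast h2) (by simpa using hs)
  have he' : ∀ x, idealPow s (e x).1.1 = ∏ j, ((Ideal.absNorm (𝔭 j) : ℂ) ^ (-s)) ^ x j := by
    intro x
    rw [idealPow, natCard_quotient_eq_absNorm, he, map_prod]
    rw [show ((∏ j, Ideal.absNorm (𝔭 j ^ x j) : ℕ) : ℂ) ^ (-s) =
      ∏ j, ((Ideal.absNorm (𝔭 j ^ x j) : ℕ) : ℂ) ^ (-s) from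
        map_prod (⟨⟨fun n : ℕ => (n : ℂ) ^ (-s), by simp⟩, fun a b => by
          simp [Complex.natCast_mul_natCast_cpow]⟩ : ℕ →* ℂ) _ _]
    refine Finset.prod_congr rfl fun j _ => ?_
    rw [map_pow]
    exact map_pow (⟨⟨fun n : ℕ => (n : ℂ) ^ (-s), by simp⟩, fun a b => by
      simp [Complex.natCast_mul_natCast_cpow]⟩ : ℕ →* ℂ) _ _
  obtain ⟨h1, h2⟩ := summable_tsum_pi_prod
    (fun j (x : ℕ) => ((Ideal.absNorm (𝔭 j) : ℂ) ^ (-s)) ^ x)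
    fun j => (summable_geometric_of_lt_one (norm_nonneg _) (hlt j)).congr fun x => by rw [norm_pow]
  constructor
  · rw [← e.summable_iff]
    exact h1.congr fun I => by rw [Function.comp_apply, he']
  · rw [← e.tsum_eq, tsum_congr he', h2]
    refine Finset.prod_ne_zero_iff.mpr fun j _ => ?_
    rw [tsum_geometric_of_norm_lt_one (hlt j)]
    refine inv_ne_zero (sub_ne_zero.mpr fun h => ?_)
    have := hlt j
    rw [← h, norm_one] at this
    exact lt_irrefl _ this

end Dedekind

/-! ### Comparing the parts at `m` for a subring of finite index -/

section Comparison

variable {R O : Type} [CommRing R] [CommRing O] {m : ℕ}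

lemma index_toAddSubgroup (I : Ideal O) :
    (Submodule.toAddSubgroup I).index = Nat.card (O ⧸ I) := rfl

/-- Since `[I : m I] = [O : m O]` for every finite-index ideal `I`, the cosets of `m I` in `I` can be
labelled by a finite set that does not depend on `I`. -/
lemma exists_coset_code (hinj : Function.Injective fun y : O => (m : O) * y)
    (I : Ideal O) (hI : Nat.card (O ⧸ I) ≠ 0)
    (hfin : Nat.card (O ⧸ Ideal.span {(m : O)}) ≠ 0) :
    ∃ c : O → Fin (Nat.card (O ⧸ Ideal.span {(m : O)})),
      ∀ x ∈ I, ∀ y ∈ I, c x = c y → ∃ z ∈ I, x - y = m * z := by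
  classical
  set B : AddSubgroup O := Submodule.toAddSubgroup I with hB
  let μ : O →+ O := AddMonoidHom.mulLeft (m : O)
  have hker : μ.ker = ⊥ := (AddMonoidHom.ker_eq_bot_iff μ).mpr hinj
  have hrange : μ.range = Submodule.toAddSubgroup (Ideal.span {(m : O)}) := by
    ext x
    simp only [AddMonoidHom.mem_range, Submodule.mem_toAddSubgroup, Ideal.mem_span_singleton']
    exact exists_congr fun a => by rw [mul_comm]; rfl
  have hle : B.map μ ≤ B := by
    rintro _ ⟨x, hx, rfl⟩
    exact I.mul_mem_left _ hx
  have h1 : (B.map μ).index = Nat.card (O ⧸ I) * Nat.card (O ⧸ Ideal.span {(m : O)}) := by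
    rw [AddSubgroup.index_map, hker, sup_bot_eq, hrange]
    rfl
  have h2 := AddSubgroup.relIndex_mul_index hle
  have h3 : (B.map μ).relIndex B = Nat.card (O ⧸ Ideal.span {(m : O)}) := by
    have h4 : B.index = Nat.card (O ⧸ I) := rfl
    rw [h1, h4, mul_comm] at h2
    exact Nat.eq_of_mul_eq_mul_left (Nat.pos_of_ne_zero hI) h2
  rw [AddSubgroup.relIndex, AddSubgroup.index] at h3
  have : Finite (B ⧸ (B.map μ).addSubgroupOf B) := Nat.finite_of_card_ne_zero (by rw [h3]; exact hfin)
  let e := Finite.equivFinOfCardEq h3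
  refine ⟨fun x => if hx : x ∈ B then e (QuotientAddGroup.mk ⟨x, hx⟩) else ⟨0, Nat.pos_of_ne_zero hfin⟩, ?_⟩
  intro x hx y hy h
  have hx' : x ∈ B := hx
  have hy' : y ∈ B := hy
  simp only [dif_pos hx', dif_pos hy'] at h
  have h5 := QuotientAddGroup.eq.mp (e.injective h).symm
  rw [AddSubgroup.mem_addSubgroupOf] at h5
  obtain ⟨z, hz, hz'⟩ := h5
  refine ⟨z, hz, ?_⟩
  change (m : O) * z = -y + x at hz'
  rw [hz']
  ring

/-- `[O : J O]` is at most `[R : J]` times the constant `[O : φ(R)]`. -/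
lemma natCard_quotient_map_le (φ : R →+* O) (hφ : Function.Injective φ)
    (hm : ∀ y : O, ∃ r : R, φ r = m * y)
    (hfin : Nat.card (O ⧸ Ideal.span {(m : O)}) ≠ 0) :
    ∃ C : ℕ, C ≠ 0 ∧ ∀ J : Ideal R, Nat.card (R ⧸ J) ≠ 0 → Nat.card (O ⧸ J.map φ) ≠ 0 ∧
      Nat.card (O ⧸ J.map φ) ≤ Nat.card (R ⧸ J) * C := by
  let ψ : R →+ O := φ.toAddMonoidHom
  have hker : ψ.ker = ⊥ := (AddMonoidHom.ker_eq_bot_iff ψ).mpr hφ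
  have hC : ψ.range.index ≠ 0 := by
    have hle : Submodule.toAddSubgroup (Ideal.span {(m : O)}) ≤ ψ.range := by
      intro x hx
      obtain ⟨a, ha⟩ := Ideal.mem_span_singleton'.mp hx
      obtain ⟨r, hr⟩ := hm a
      exact ⟨r, by rw [← ha, mul_comm]; exact hr⟩
    exact fun h => hfin (Nat.eq_zero_of_zero_dvd (h ▸ AddSubgroup.index_dvd_of_le hle))
  refine ⟨ψ.range.index, hC, fun J hJ => ?_⟩
  have hle : (Submodule.toAddSubgroup J).map ψ ≤ Submodule.toAddSubgroup (J.map φ) := by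
    rintro _ ⟨x, hx, rfl⟩
    exact Ideal.mem_map_of_mem φ hx
  have h1 : ((Submodule.toAddSubgroup J).map ψ).index = Nat.card (R ⧸ J) * ψ.range.index := by
    rw [AddSubgroup.index_map, hker, sup_bot_eq]
    rfl
  have h2 : Nat.card (O ⧸ J.map φ) ∣ Nat.card (R ⧸ J) * ψ.range.index := by
    rw [← h1]
    exact AddSubgroup.index_dvd_of_le hle
  have h3 : Nat.card (R ⧸ J) * ψ.range.index ≠ 0 := mul_ne_zero hJ hC
  exact ⟨ne_zero_of_dvd_ne_zero h3 h2, Nat.le_of_dvd (Nat.pos_of_ne_zero h3) h2⟩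

/-- Convergence on `Re s > 0` of the part at `m` passes from `O` to `R`. With `I = J O` one has
`m I ⊆ φ(J) ⊆ I`, so `J` is determined by `I` and a set of cosets of `m I` in `I`; hence each `I` arises
from boundedly many `J`, whose indices are comparable with that of `I`. -/
lemma summable_primaryIdeal_subring (φ : R →+* O) (hφ : Function.Injective φ)
    (hm : ∀ y : O, ∃ r : R, φ r = m * y)
    (hinj : Function.Injective fun y : O => (m : O) * y)
    (hfin : Nat.card (O ⧸ Ideal.span {(m : O)}) ≠ 0) {s : ℂ} (hs : 0 < s.re)
    (h : Summable fun I : PrimaryIdeal O m => ‖idealPow s I.1.1‖) :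
    Summable fun J : PrimaryIdeal R m => ‖idealPow s J.1.1‖ := by
  classical
  obtain ⟨C, hC, hCJ⟩ := natCard_quotient_map_le φ hφ hm hfin
  have hc : ∀ I : PrimaryIdeal O m, ∃ c : O → Fin (Nat.card (O ⧸ Ideal.span {(m : O)})),
      ∀ x ∈ I.1.1, ∀ y ∈ I.1.1, c x = c y → ∃ z ∈ I.1.1, x - y = m * z := fun I =>
    exists_coset_code hinj I.1.1 I.1.2 hfin
  choose c hc using hc
  let ext : PrimaryIdeal R m → PrimaryIdeal O m := fun J =>
    ⟨⟨J.1.1.map φ, (hCJ _ J.1.2).1⟩, J.2.imp fun k hk => by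
      have := Ideal.mem_map_of_mem φ hk
      rwa [map_pow, map_natCast] at this⟩
  let F : PrimaryIdeal R m → PrimaryIdeal O m × Set (Fin (Nat.card (O ⧸ Ideal.span {(m : O)}))) :=
    fun J => (ext J, Set.image (fun r => c (ext J) (φ r)) (J.1.1 : Set R))
  have hsub : ∀ J J' : PrimaryIdeal R m, F J = F J' → J.1.1 ≤ J'.1.1 := by
    intro J J' hJ r hr
    have h1 : ext J = ext J' := congrArg Prod.fst hJ
    have h2 : Set.image (fun r => c (ext J) (φ r)) (J.1.1 : Set R) =
      Set.image (fun r => c (ext J') (φ r)) (J'.1.1 : Set R) := congrArg Prod.snd hJ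
    have h3 : c (ext J) (φ r) ∈ Set.image (fun r => c (ext J') (φ r)) (J'.1.1 : Set R) := by
      rw [← h2]
      exact ⟨r, hr, rfl⟩
    obtain ⟨r', hr', h4⟩ := h3
    have hrI : φ r ∈ (ext J').1.1 := by
      rw [← h1]
      exact Ideal.mem_map_of_mem φ hr
    have hrI' : φ r' ∈ (ext J').1.1 := Ideal.mem_map_of_mem φ hr'
    rw [h1] at h4
    obtain ⟨z, hz, hz'⟩ := hc (ext J') _ hrI _ hrI' h4.symm
    obtain ⟨r'', hr'', h5⟩ := mul_mem_map hm J'.1.1 hz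
    have h6 : r = r' + r'' := hφ (by rw [map_add, h5, ← hz']; ring)
    rw [h6]
    exact J'.1.1.add_mem hr' hr''
  have hF : Function.Injective F := fun J J' hJ =>
    Subtype.ext (Subtype.ext (le_antisymm (hsub _ _ hJ) (hsub _ _ hJ.symm)))
  have hprod : Summable fun p : PrimaryIdeal O m × Set (Fin (Nat.card (O ⧸ Ideal.span {(m : O)}))) =>
      ‖idealPow s p.1.1.1‖ * (1 : ℝ) :=
    h.mul_of_nonneg (g := fun _ => (1 : ℝ)) (Summable.of_finite) (fun _ => norm_nonneg _) (fun _ => zero_le_one)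
  refine Summable.of_nonneg_of_le (fun _ => norm_nonneg _) (fun J => ?_)
    ((hprod.comp_injective hF).mul_left ((C : ℝ) ^ s.re))
  obtain ⟨h1, h2⟩ := hCJ _ J.1.2
  change _ ≤ (C : ℝ) ^ s.re * (‖idealPow s (J.1.1.map φ)‖ * 1)
  have hN := Nat.pos_of_ne_zero J.1.2
  rw [mul_one, idealPow, idealPow, Complex.norm_natCast_cpow_of_pos hN,
    Complex.norm_natCast_cpow_of_pos (Nat.pos_of_ne_zero h1), Complex.neg_re,
    Real.rpow_neg (Nat.cast_nonneg _), Real.rpow_neg (Nat.cast_nonneg _), ← div_eq_mul_inv,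
    le_div_iff₀ (Real.rpow_pos_of_pos (by exact_mod_cast Nat.pos_of_ne_zero h1) _),
    inv_mul_le_iff₀ (Real.rpow_pos_of_pos (by exact_mod_cast hN) _),
    ← Real.mul_rpow (Nat.cast_nonneg _) (Nat.cast_nonneg _)]
  exact Real.rpow_le_rpow (Nat.cast_nonneg _) (by exact_mod_cast h2) hs.le

end Comparison

section Primary

variable {S : Type} [CommRing S] {m : ℕ}

/-- On `Re s > σ` the terms are dominated by their values at `σ`, because every index is at least `1`. -/
lemma differentiableOn_primarySum
    (h : ∀ s : ℂ, 0 < s.re → Summable fun I : PrimaryIdeal S m => ‖idealPow s I.1.1‖) :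
    DifferentiableOn ℂ (fun s => ∑' I : PrimaryIdeal S m, idealPow s I.1.1) {s | 0 < s.re} := by
  intro s hs
  rw [Set.mem_ofPred_eq] at hs
  have hopen : IsOpen {z : ℂ | s.re / 2 < z.re} := isOpen_lt continuous_const Complex.continuous_re
  have h1 := h ((s.re / 2 : ℝ) : ℂ) (by rw [Complex.ofReal_re]; linarith)
  have := Complex.differentiableOn_tsum_of_summable_norm (F := fun (I : PrimaryIdeal S m) z =>
    idealPow z I.1.1) h1 (fun I => ?_) hopen (fun I z hz => ?_)
  · exact ((this s (by rw [Set.mem_ofPred_eq]; linarith)).differentiableAt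
      (hopen.mem_nhds (by rw [Set.mem_ofPred_eq]; linarith))).differentiableWithinAt
  · intro z _
    have h0 : (Nat.card (S ⧸ I.1.1) : ℂ) ≠ 0 := by exact_mod_cast I.1.2
    exact (differentiableAt_id.neg.const_cpow (Or.inl h0)).differentiableWithinAt
  · rw [Set.mem_ofPred_eq] at hz
    have hN := Nat.pos_of_ne_zero I.1.2
    rw [idealPow, idealPow, Complex.norm_natCast_cpow_of_pos hN,
      Complex.norm_natCast_cpow_of_pos hN]
    refine Real.rpow_le_rpow_of_exponent_le (by exact_mod_cast hN) ?_
    rw [Complex.neg_re, Complex.neg_re, Complex.ofReal_re]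
    linarith

/-- At `s = 1` all terms are nonnegative, and the unit ideal contributes `1`. -/
lemma primarySum_one_ne_zero
    (h : Summable fun I : PrimaryIdeal S m => ‖idealPow 1 I.1.1‖) :
    ∑' I : PrimaryIdeal S m, idealPow 1 I.1.1 ≠ 0 := by
  have h1 : ∀ I : PrimaryIdeal S m, idealPow 1 I.1.1 = ((‖idealPow 1 I.1.1‖ : ℝ) : ℂ) := by
    intro I
    rw [idealPow, Complex.cpow_neg_one, norm_inv, Complex.norm_natCast, Complex.ofReal_inv,
      Complex.ofReal_natCast]
  rw [tsum_congr h1, ← Complex.ofReal_tsum, Complex.ofReal_ne_zero]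
  have htop : Nat.card (S ⧸ (⊤ : Ideal S)) = 1 := by
    have : Subsingleton (S ⧸ (⊤ : Ideal S)) := Ideal.Quotient.subsingleton_iff.mpr rfl
    exact Nat.card_unique
  let T : PrimaryIdeal S m := ⟨⟨⊤, by rw [htop]; exact one_ne_zero⟩, 0, Submodule.mem_top⟩
  refine (h.tsum_pos (fun _ => norm_nonneg _) T ?_).ne'
  change 0 < ‖idealPow 1 (⊤ : Ideal S)‖
  rw [idealPow, htop]
  simp

end Primary

/-! ### Embedding in a product of rings of integers -/

section Embedding

open NumberField Polynomial

/-- The number field `ℚ[X] / (p)` with the class `α` of `X`; by Gauss's lemma `p` is irreducible over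
`ℚ`, and the kernel of evaluation at `α` on `ℤ[X]` is `(p)`. -/
lemma exists_numberField_root {p : ℤ[X]} (hp : Irreducible p) (hmon : p.Monic) :
    ∃ (K : Type) (_ : Field K) (_ : NumberField K) (α : 𝓞 K),
      Module.finrank ℤ (𝓞 K) = p.natDegree ∧ ∀ q : ℤ[X], aeval α q = 0 ↔ p ∣ q := by
  have hP : Irreducible (p.map (algebraMap ℤ ℚ)) :=
    (hmon.irreducible_iff_irreducible_map_fraction_map (K := ℚ)).mp hp
  have : Fact (Irreducible (p.map (algebraMap ℤ ℚ))) := ⟨hP⟩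
  have hfd : FiniteDimensional ℚ (AdjoinRoot (p.map (algebraMap ℤ ℚ))) :=
    (AdjoinRoot.powerBasis hP.ne_zero).finite
  have hev : ∀ q : ℤ[X], aeval (AdjoinRoot.root (p.map (algebraMap ℤ ℚ))) q =
      AdjoinRoot.mk _ (q.map (algebraMap ℤ ℚ)) := fun q => by
    rw [← AdjoinRoot.aeval_eq, aeval_def, aeval_def, eval₂_map]
    exact congrArg (fun ρ => eval₂ ρ _ q) (RingHom.ext_int _ _)
  have hnf : NumberField (AdjoinRoot (p.map (algebraMap ℤ ℚ))) :=
    { to_charZero := charZero_of_injective_algebraMap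
        (algebraMap ℚ (AdjoinRoot (p.map (algebraMap ℤ ℚ)))).injective
      to_finiteDimensional := hfd }
  have hdvd : ∀ q : ℤ[X], aeval (AdjoinRoot.root (p.map (algebraMap ℤ ℚ))) q = 0 ↔ p ∣ q :=
    fun q => by
      rw [hev, AdjoinRoot.mk_eq_zero]
      exact map_dvd_map _ (algebraMap ℤ ℚ).injective_int hmon
  have hint : IsIntegral ℤ (AdjoinRoot.root (p.map (algebraMap ℤ ℚ))) :=
    ⟨p, hmon, (hdvd p).mpr dvd_rfl⟩
  obtain ⟨α, hα⟩ : ∃ α : 𝓞 (AdjoinRoot (p.map (algebraMap ℤ ℚ))),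
      algebraMap _ (AdjoinRoot (p.map (algebraMap ℤ ℚ))) α = AdjoinRoot.root _ :=
    ⟨⟨_, hint⟩, rfl⟩
  refine ⟨AdjoinRoot (p.map (algebraMap ℤ ℚ)), inferInstance, hnf, α, ?_, fun q => ?_⟩
  · rw [RingOfIntegers.rank, (AdjoinRoot.powerBasis hP.ne_zero).finrank,
      AdjoinRoot.powerBasis_dim, hmon.natDegree_map]
  · rw [← hdvd q, ← hα, aeval_algebraMap_apply, map_eq_zero_iff _ RingOfIntegers.coe_injective]

lemma finite_quotient_range {M N : Type} [AddCommGroup M] [AddCommGroup N]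
    [Module.Free ℤ N] [Module.Finite ℤ N] (ψ : M →ₗ[ℤ] N) (hψ : Function.Injective ψ)
    (h : Module.finrank ℤ M = Module.finrank ℤ N) : Finite (N ⧸ LinearMap.range ψ) := by
  rw [Submodule.finiteQuotient_iff, LinearMap.finrank_range_of_inj hψ, h]

/-- The ring `ℤ[X] / (g₁ ⋯ g_k)` embeds in the product of the rings of integers of the fields
`ℚ[X] / (g i)`. Both have the same rank, so the image has finite index, and this index serves as `m`. -/
lemma exists_embedding {k : ℕ} (g : Fin k → ℤ[X]) (hirr : ∀ i, Irreducible (g i))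
    (hmonic : ∀ i, (g i).Monic) (hdist : Function.Injective g) :
    ∃ (K : Fin k → Type) (_ : ∀ i, Field (K i)) (_ : ∀ i, NumberField (K i))
      (φ : (ℤ[X] ⧸ Ideal.span {∏ i, g i}) →+* ∀ i, 𝓞 (K i)) (m : ℕ),
      Function.Injective φ ∧ m ≠ 0 ∧ ∀ y, ∃ r, φ r = m * y := by
  choose K hF hN α hrank hα using fun i => exists_numberField_root (hirr i) (hmonic i)
  let ev : ℤ[X] →+* ∀ i, 𝓞 (K i) := RingHom.pi fun i => (aeval (α i)).toRingHom
  have hev : ∀ q, ev q = 0 ↔ (∏ i, g i) ∣ q := by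
    intro q
    have h1 : ev q = 0 ↔ ∀ i, g i ∣ q := by
      rw [funext_iff]
      exact forall_congr' fun i => hα i q
    rw [h1]
    refine ⟨fun h => Finset.prod_dvd_of_isRelPrime (fun i _ j _ hij => ?_) fun i _ => h i,
      fun h i => (Finset.dvd_prod_of_mem g (Finset.mem_univ i)).trans h⟩
    refine (hirr i).isRelPrime_iff_not_dvd.mpr fun hd => hij (hdist ?_)
    exact eq_of_monic_of_associated (hmonic i) (hmonic j)
      ((hirr i).associated_of_dvd (hirr j) hd)
  let φ : (ℤ[X] ⧸ Ideal.span {∏ i, g i}) →+* ∀ i, 𝓞 (K i) :=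
    Ideal.Quotient.lift _ ev fun a ha => (hev a).mpr (Ideal.mem_span_singleton.mp ha)
  have hφ : Function.Injective φ := by
    rw [injective_iff_map_eq_zero]
    intro a ha
    obtain ⟨q, rfl⟩ := Ideal.Quotient.mk_surjective a
    rw [Ideal.Quotient.lift_mk] at ha
    exact Ideal.Quotient.eq_zero_iff_mem.mpr (Ideal.mem_span_singleton.mpr ((hev q).mp ha))
  have hmon : (∏ i, g i).Monic := monic_prod_of_monic _ _ fun i _ => hmonic i
  have hfin := finite_quotient_range φ.toAddMonoidHom.toIntLinearMap hφ (by
    rw [finrank_quotient_span_eq_natDegree' hmon, Module.finrank_pi_fintype,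
      natDegree_prod_of_monic _ _ fun i _ => hmonic i]
    exact Finset.sum_congr rfl fun i _ => (hrank i).symm)
  refine ⟨K, hF, hN, φ, φ.toAddMonoidHom.range.index, hφ, ?_, fun y => ?_⟩
  · exact (Nat.card_pos (α := (∀ i, 𝓞 (K i)) ⧸
      LinearMap.range φ.toAddMonoidHom.toIntLinearMap)).ne'
  · obtain ⟨r, hr⟩ := AddSubgroup.nsmul_index_mem φ.toAddMonoidHom.range y
    exact ⟨r, by rw [← nsmul_eq_mul]; exact hr⟩

end Embedding

/-! ### The zeta function of a finite-index subring -/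

section Final

open NumberField

lemma natCard_quotient_natCast_ne_zero {k : ℕ} (K : Fin k → Type) [∀ i, Field (K i)]
    [∀ i, NumberField (K i)] {m : ℕ} (hm : m ≠ 0) :
    Function.Injective (fun y : ∀ i, 𝓞 (K i) => (m : ∀ i, 𝓞 (K i)) * y) ∧
    Nat.card ((∀ i, 𝓞 (K i)) ⧸ Ideal.span {(m : ∀ i, 𝓞 (K i))}) ≠ 0 := by
  have hinj : Function.Injective (fun y : ∀ i, 𝓞 (K i) => (m : ∀ i, 𝓞 (K i)) * y) := by
    intro x y h
    funext i
    have h1 : (m : 𝓞 (K i)) * x i = m * y i := congrFun h i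
    exact mul_left_cancel₀ (by exact_mod_cast hm) h1
  refine ⟨hinj, ?_⟩
  have hfin := finite_quotient_range
    (AddMonoidHom.mulLeft (m : ∀ i, 𝓞 (K i))).toIntLinearMap hinj rfl
  have hrange : (AddMonoidHom.mulLeft (m : ∀ i, 𝓞 (K i))).range =
      Submodule.toAddSubgroup (Ideal.span {(m : ∀ i, 𝓞 (K i))}) := by
    ext x
    simp only [AddMonoidHom.mem_range, Submodule.mem_toAddSubgroup, Ideal.mem_span_singleton']
    exact exists_congr fun a => by rw [mul_comm]; rfl
  rw [← index_toAddSubgroup, ← hrange]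
  exact (Nat.card_pos (α := (∀ i, 𝓞 (K i)) ⧸
      LinearMap.range (AddMonoidHom.mulLeft (m : ∀ i, 𝓞 (K i))).toIntLinearMap)).ne'

/-- For `R` embedded with `m O ⊆ φ(R)` in `O = ∏ i, 𝓞 (K i)`, the zeta function of `R` is that of `O`
multiplied by the quotient of the parts at `m`, which is holomorphic on `Re s > 0` and nonzero at `1`. -/
lemma exists_idealSum_meromorphic {k : ℕ} (K : Fin k → Type) [∀ i, Field (K i)]
    [∀ i, NumberField (K i)] {R : Type} [CommRing R] (φ : R →+* ∀ i, 𝓞 (K i))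
    (hφ : Function.Injective φ) {m : ℕ} (hm0 : m ≠ 0) (hm : ∀ y, ∃ r, φ r = m * y) :
    ∃ Z : ℂ → ℂ, MeromorphicOn Z {s : ℂ | 0 < s.re} ∧
      (∀ s : ℂ, 1 < s.re → (Summable fun I : FinIdeal R => ‖idealPow s I.1‖) ∧
        Z s = ∑' I : FinIdeal R, idealPow s I.1) ∧
      ∃ H : ℂ → ℂ, AnalyticAt ℂ H 1 ∧ H 1 ≠ 0 ∧
        ∀ᶠ s in 𝓝[≠] (1 : ℂ), (s - 1) ^ k * Z s = H s := by
  choose ζ hζmer hζsum h hh hh1 hζh using fun i => exists_dedekindZeta_meromorphic (K i)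
  obtain ⟨hinj, hfin⟩ := natCard_quotient_natCast_ne_zero K hm0
  have hO : ∀ s : ℂ, 0 < s.re →
      (Summable fun I : PrimaryIdeal (∀ i, 𝓞 (K i)) m => ‖idealPow s I.1.1‖) ∧
      ∑' I : PrimaryIdeal (∀ i, 𝓞 (K i)) m, idealPow s I.1.1 ≠ 0 := by
    intro s hs
    obtain ⟨h1, h2⟩ := primarySum_pi (A := fun i => 𝓞 (K i)) (m := m) (s := s)
      fun i => (primarySum_ringOfIntegers (K i) hm0 hs).1
    refine ⟨h1, ?_⟩
    rw [h2]
    exact Finset.prod_ne_zero_iff.mpr fun i _ => (primarySum_ringOfIntegers (K i) hm0 hs).2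
  have hR : ∀ s : ℂ, 0 < s.re → Summable fun I : PrimaryIdeal R m => ‖idealPow s I.1.1‖ :=
    fun s hs => summable_primaryIdeal_subring φ hφ hm hinj hfin hs (hO s hs).1
  set EO : ℂ → ℂ := fun s => ∑' I : PrimaryIdeal (∀ i, 𝓞 (K i)) m, idealPow s I.1.1 with hEO
  set ER : ℂ → ℂ := fun s => ∑' I : PrimaryIdeal R m, idealPow s I.1.1 with hER
  have hopen : IsOpen {s : ℂ | 0 < s.re} := isOpen_lt continuous_const Complex.continuous_re
  have hEOan : ∀ s ∈ {s : ℂ | 0 < s.re}, AnalyticAt ℂ EO s := fun s hs =>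
    (differentiableOn_primarySum fun s hs => (hO s hs).1).analyticAt (hopen.mem_nhds hs)
  have hERan : ∀ s ∈ {s : ℂ | 0 < s.re}, AnalyticAt ℂ ER s := fun s hs =>
    (differentiableOn_primarySum hR).analyticAt (hopen.mem_nhds hs)
  have h1mem : (1 : ℂ) ∈ {s : ℂ | 0 < s.re} := by simp
  have hpos1 : 0 < (1 : ℂ).re := by simp
  refine ⟨fun s => (∏ i, ζ i s) * (ER s / EO s), fun s hs => ?_, fun s hs => ?_,
    fun s => (∏ i, h i s) * (ER s / EO s), ?_, ?_, ?_⟩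
  · refine (MeromorphicAt.fun_prod fun i _ => hζmer i s hs).mul
      ((hERan s hs).meromorphicAt.div (hEOan s hs).meromorphicAt)
  · obtain ⟨h1, h2⟩ := idealSum_pi (A := fun i => 𝓞 (K i)) (s := s) fun i => (hζsum i s hs).1
    have hs0 : 0 < s.re := by linarith
    have hCO : Summable fun I : CoprimeIdeal (∀ i, 𝓞 (K i)) m => ‖idealPow s I.1.1‖ :=
      h1.comp_injective Subtype.val_injective
    obtain ⟨e, he⟩ := comap_bijective hφ hm
    have he' : ∀ I, idealPow s (e I).1.1 = idealPow s I.1.1 := fun I => by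
      rw [idealPow, idealPow, he]
    have hCR : Summable fun I : CoprimeIdeal R m => ‖idealPow s I.1.1‖ := by
      rw [← e.summable_iff]
      exact hCO.congr fun I => by rw [Function.comp_apply, he']
    obtain ⟨h3, h4⟩ := idealSum_eq_mul m (hR s hs0) hCR
    obtain ⟨-, h5⟩ := idealSum_eq_mul m (hO s hs0).1 hCO
    refine ⟨h3, ?_⟩
    have h6 : ∏ i, ζ i s = ∏ i, ∑' I : FinIdeal (𝓞 (K i)), idealPow s I.1 :=
      Finset.prod_congr rfl fun i _ => (hζsum i s hs).2
    change (∏ i, ζ i s) * (ER s / EO s) = _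
    rw [h6, ← h2, h5, h4, ← e.tsum_eq, tsum_congr he']
    have h7 : EO s ≠ 0 := (hO s hs0).2
    change EO s * _ * (ER s / EO s) = ER s * _
    field_simp
  · exact (Finset.analyticAt_fun_prod _ fun i _ => hh i).mul
      ((hERan 1 h1mem).div (hEOan 1 h1mem) (hO 1 hpos1).2)
  · exact mul_ne_zero (Finset.prod_ne_zero_iff.mpr fun i _ => hh1 i)
      (div_ne_zero (primarySum_one_ne_zero (hR 1 hpos1)) (hO 1 hpos1).2)
  · filter_upwards [eventually_all.mpr hζh] with s hs
    rw [← mul_assoc, ← Finset.prod_congr rfl fun i _ => hs i, Finset.prod_mul_distrib,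
      Finset.prod_const, Finset.card_univ, Fintype.card_fin]

end Final

/-- For `f = g₁⋯g_k` a product of `k` pairwise distinct monic irreducible polynomials over ℤ,
the zeta function of `Z_f = ℤ[X]/(f)` converges for `Re(s) > 1` and extends meromorphically
to `Re(s) > 0` with a pole of order exactly `k` at `s = 1`. -/
theorem zeta_quotient_separable (k : ℕ) (hk : 0 < k) (g : Fin k → Polynomial ℤ)
    (hirr : ∀ i, Irreducible (g i)) (hmonic : ∀ i, (g i).Monic)
    (hdist : Function.Injective g)
    (f : Polynomial ℤ) (hf : f = ∏ i, g i) (hfmonic : f.Monic) :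
    (∀ s : ℂ, 1 < s.re →
      LSeriesSummable (fun n => (Nat.card {I : Ideal (Polynomial ℤ ⧸ Ideal.span {f}) //
        Nat.card ((Polynomial ℤ ⧸ Ideal.span {f}) ⧸ I) = n} : ℂ)) s) ∧
    ∃ Z : ℂ → ℂ, MeromorphicOn Z {s : ℂ | 0 < s.re} ∧
      (∀ s : ℂ, 1 < s.re →
        Z s = LSeries (fun n => (Nat.card {I : Ideal (Polynomial ℤ ⧸ Ideal.span {f}) //
          Nat.card ((Polynomial ℤ ⧸ Ideal.span {f}) ⧸ I) = n} : ℂ)) s) ∧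
      ∃ H : ℂ → ℂ, AnalyticAt ℂ H 1 ∧ H 1 ≠ 0 ∧
        ∀ᶠ s in 𝓝[≠] (1 : ℂ), (s - 1) ^ k * Z s = H s := by
  subst hf
  obtain ⟨K, hF, hN, φ, m, hφ, hm0, hm⟩ := exists_embedding g hirr hmonic hdist
  obtain ⟨Z, hZ, hsum, hpole⟩ := exists_idealSum_meromorphic K φ hφ hm0 hm
  exact ⟨fun s hs => (lseries_idealCount (hsum s hs).1).1, Z, hZ,
    fun s hs => (hsum s hs).2.trans (lseries_idealCount (hsum s hs).1).2.symm, hpole⟩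
end

section
/- Let S be a commutative ring with identity, p a prime number, and let R = ℤ·1 + pS be the subring of S generated additively by the image of ℤ and the set pS. If I₁ and I₂ are ideals of R such that the ideals of S generated by I₁ and by I₂ coincide (S·I₁ = S·I₂), then p·I₂ ⊆ I₁ and p·I₁ ⊆ I₂. -/
/-!
Since `pS ⊆ R`, every ideal `I` of `R` satisfies `p(S·I) = (pS)·I ⊆ R·I = I`
(`exists_mem_eq_of_mem_map`). If `S·I = S·J`, then `J ⊆ S·I`, hence `p·J ⊆ I`; the two
inclusions are this fact for `(I₁, I₂)` and `(I₂, I₁)`.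
-/

/-- If `pS ⊆ R`, then `p(S·I) ⊆ I` for every ideal `I` of `R`. The multiplier `s` is part of the
statement so that the induction over the extended ideal passes through multiplication by `S`. -/
theorem exists_mem_eq_of_mem_map {S : Type*} [CommRing S] {p : ℕ} {R : Subring S}
    (hpS : ∀ s : S, p • s ∈ R) (I : Ideal R) {z : S} (hz : z ∈ Ideal.map R.subtype I) (s : S) :
    ∃ w ∈ I, (w : S) = p • (s * z) := by
  unfold Ideal.map at hz
  induction hz using Submodule.span_induction generalizing s with
  | mem z hz =>
    obtain ⟨x, hx, rfl⟩ := hz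
    exact ⟨⟨p • s, hpS s⟩ * x, I.mul_mem_left _ hx, by simp [mul_assoc]⟩
  | zero => exact ⟨0, I.zero_mem, by simp⟩
  | add y z _ _ hy hz =>
    obtain ⟨v, hv, hv'⟩ := hy s
    obtain ⟨w, hw, hw'⟩ := hz s
    exact ⟨v + w, I.add_mem hv hw, by simp [hv', hw', mul_add]⟩
  | smul a z _ hz =>
    obtain ⟨w, hw, hw'⟩ := hz (s * a)
    exact ⟨w, hw, by rw [hw', smul_eq_mul, mul_assoc]⟩

/-- Let `R = ℤ·1 + pS` inside a commutative ring `S`, `p` prime. If two ideals `I₁, I₂` of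
`R` generate the same ideal of `S`, then `p·I₂ ⊆ I₁` and `p·I₁ ⊆ I₂`. -/
theorem smul_mem_of_span_eq (S : Type*) [CommRing S] (p : ℕ) (hp : p.Prime)
    (R : Subring S) (hR : (R : Set S) = {x : S | ∃ (a : ℤ) (y : S), x = a • (1 : S) + p • y})
    (I₁ I₂ : Ideal R)
    (h : Ideal.map (R.subtype) I₁ = Ideal.map (R.subtype) I₂) :
    (∀ x ∈ I₂, p • x ∈ I₁) ∧ (∀ x ∈ I₁, p • x ∈ I₂) := by
  have hpS : ∀ s : S, p • s ∈ R := fun s => by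
    rw [← SetLike.mem_coe, hR]
    exact ⟨0, s, by simp⟩
  have key : ∀ I J : Ideal R, Ideal.map R.subtype I = Ideal.map R.subtype J →
      ∀ x ∈ J, p • x ∈ I := by
    intro I J hIJ x hx
    have hxI : (x : S) ∈ Ideal.map R.subtype I := hIJ ▸ Ideal.mem_map_of_mem R.subtype hx
    obtain ⟨w, hw, hw'⟩ := exists_mem_eq_of_mem_map hpS I hxI 1
    have hwx : w = p • x := Subtype.ext (by simpa using hw')
    exact hwx ▸ hw
  exact ⟨key I₁ I₂ h, key I₂ I₁ h.symm⟩
end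

section
/- Let A = (a_{i,j})_{0≤i,j≤d-1} ∈ ℤ^{d×d} be an upper triangular matrix with nonzero determinant which is idealizing, i.e., for every 0 ≤ j ≤ d-2, the vector σ(A e_j) obtained from the j-th column of A by shifting its entries down by one position (inserting 0 in the top coordinate) lies in the subgroup of ℤ^d generated by the columns A e_0, …, A e_{j+1}. Then for every 1 ≤ j ≤ d-1, the diagonal entry a_{j,j} divides a_{i,k} for all 0 ≤ i, k ≤ j. -/
/-!
Identify the `j`-th column of `A` with a polynomial `p_j` of degree `j` and leading coefficient
`a_{j,j}`, which is nonzero because `det A = ∏ a_{j,j}`. The shift is multiplication by `X`, so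
`X p_j = c p_{j+1} + ∑_{l ≤ j} c_l p_l`. Comparing coefficients of degree `j+1` gives
`a_{j,j} = c a_{j+1,j+1}`. If `a_{j,j}` divides `p_0, …, p_j`, then it divides `c p_{j+1}`;
cancelling `c ≠ 0` shows that `a_{j+1,j+1}` divides `p_{j+1}`, and it divides `p_0, …, p_j`
since it divides `a_{j,j}`. This is the induction step of `diag_dvd_columns`; the decomposition of
`X p_j` modulo `a_{j,j}` is `exists_leading_coeff`.
-/

/-- The down-shift of a vector: `σ(v)_0 = 0` and `σ(v)_i = v_{i-1}` for `i ≥ 1`. -/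
def shiftDown {d : ℕ} (v : Fin d → ℤ) : Fin d → ℤ :=
  fun i => if (i : ℕ) = 0 then 0
    else v ⟨(i : ℕ) - 1, lt_of_le_of_lt (Nat.sub_le _ _) i.isLt⟩

/-- If `m` divides every column of index at most `n`, then any `w` in the span of the columns of
index at most `n + 1` is, modulo `m`, a multiple `c` of column `n + 1`; the coordinate `n + 1` of
`w` is exactly `c` times the diagonal entry, because the earlier columns vanish there. -/
lemma exists_leading_coeff {d : ℕ} (A : Matrix (Fin d) (Fin d) ℤ)
    (hut : ∀ i j : Fin d, (j : ℕ) < (i : ℕ) → A i j = 0) (n : ℕ) (hn : n + 1 < d) (m : ℤ)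
    (hm : ∀ i k : Fin d, (k : ℕ) ≤ n → m ∣ A i k) (w : Fin d → ℤ)
    (hw : w ∈ Submodule.span ℤ
      {w : Fin d → ℤ | ∃ l : Fin d, (l : ℕ) ≤ n + 1 ∧ w = fun i => A i l}) :
    ∃ c : ℤ, w ⟨n + 1, hn⟩ = c * A ⟨n + 1, hn⟩ ⟨n + 1, hn⟩ ∧
      ∀ i, m ∣ w i - c * A i ⟨n + 1, hn⟩ := by
  induction hw using Submodule.span_induction with
  | mem x hx =>
    obtain ⟨l, hl, rfl⟩ := hx
    rcases Nat.lt_or_ge n l with h | h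
    · obtain rfl : l = ⟨n + 1, hn⟩ := Fin.ext (by simp; omega)
      exact ⟨1, by simp, by simp⟩
    · refine ⟨0, ?_, fun i => by simpa using hm i l h⟩
      simpa using hut ⟨n + 1, hn⟩ l (by simp; omega)
  | zero => exact ⟨0, by simp, by simp⟩
  | add x y _ _ hx hy =>
    obtain ⟨c, hc, hx⟩ := hx
    obtain ⟨e, he, hy⟩ := hy
    refine ⟨c + e, by rw [Pi.add_apply, hc, he]; ring, fun i => ?_⟩
    have hsplit : (x + y) i - (c + e) * A i ⟨n + 1, hn⟩ =
        (x i - c * A i ⟨n + 1, hn⟩) + (y i - e * A i ⟨n + 1, hn⟩) := by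
      rw [Pi.add_apply]; ring
    rw [hsplit]
    exact dvd_add (hx i) (hy i)
  | smul a x _ hx =>
    obtain ⟨c, hc, hx⟩ := hx
    refine ⟨a * c, by rw [Pi.smul_apply, hc, smul_eq_mul]; ring, fun i => ?_⟩
    have hsplit : (a • x) i - a * c * A i ⟨n + 1, hn⟩ =
        a * (x i - c * A i ⟨n + 1, hn⟩) := by
      rw [Pi.smul_apply, smul_eq_mul]; ring
    rw [hsplit]
    exact (hx i).mul_left a

/-- The divisibility by induction on the diagonal index `n`. It also holds for `n = 0`, and in all
rows `i`, which keeps the induction hypothesis applicable to shifted columns. -/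
lemma diag_dvd_columns {d : ℕ} (A : Matrix (Fin d) (Fin d) ℤ)
    (hut : ∀ i j : Fin d, (j : ℕ) < (i : ℕ) → A i j = 0)
    (hdiag : ∀ i, A i i ≠ 0)
    (hideal : ∀ j : Fin d, (j : ℕ) + 2 ≤ d →
      shiftDown (fun i => A i j) ∈ Submodule.span ℤ
        {w : Fin d → ℤ | ∃ l : Fin d, (l : ℕ) ≤ (j : ℕ) + 1 ∧ w = fun i => A i l})
    (n : ℕ) (hn : n < d) (i k : Fin d) (hk : (k : ℕ) ≤ n) :
    A ⟨n, hn⟩ ⟨n, hn⟩ ∣ A i k := by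
  induction n generalizing i k with
  | zero =>
    obtain rfl : k = ⟨0, hn⟩ := Fin.ext (by simpa using hk)
    rcases Nat.eq_zero_or_pos (i : ℕ) with h | h
    · obtain rfl : i = ⟨0, hn⟩ := Fin.ext h
      exact dvd_rfl
    · rw [hut i _ h]
      exact dvd_zero _
  | succ n ih =>
    have hn' : n < d := by omega
    obtain ⟨c, hc, hcol⟩ := exists_leading_coeff A hut n hn _ (ih hn') _
      (hideal ⟨n, hn'⟩ (by simp; omega))
    have hc' : A ⟨n, hn'⟩ ⟨n, hn'⟩ = c * A ⟨n + 1, hn⟩ ⟨n + 1, hn⟩ := by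
      simpa [shiftDown] using hc
    have hc0 : c ≠ 0 := by
      rintro rfl
      exact hdiag ⟨n, hn'⟩ (by simpa using hc')
    rcases Nat.lt_or_ge n k with h | h
    · obtain rfl : k = ⟨n + 1, hn⟩ := Fin.ext (by simp; omega)
      have hshift : A ⟨n, hn'⟩ ⟨n, hn'⟩ ∣ shiftDown (fun i => A i ⟨n, hn'⟩) i := by
        unfold shiftDown
        split_ifs
        · exact dvd_zero _
        · exact ih hn' _ _ le_rfl
      have hmul := (dvd_sub_right hshift).1 (hcol i)
      rw [hc'] at hmul
      exact (mul_dvd_mul_iff_left hc0).1 hmul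
    · exact (Dvd.intro_left c hc'.symm).trans (ih hn' i k h)

/-- Divisibility property (2) of idealizing matrices: if `A` is upper triangular with
nonzero determinant and for each `0 ≤ j ≤ d-2` the shifted `j`-th column lies in the
subgroup generated by columns `0,…,j+1`, then `a_{j,j} ∣ a_{i,k}` for all `i, k ≤ j`. -/
theorem idealizing_matrix_divisibility {d : ℕ} (A : Matrix (Fin d) (Fin d) ℤ)
    (hut : ∀ i j : Fin d, (j : ℕ) < (i : ℕ) → A i j = 0)
    (hdet : A.det ≠ 0)
    (hideal : ∀ j : Fin d, (j : ℕ) + 2 ≤ d →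
      shiftDown (fun i => A i j) ∈ Submodule.span ℤ
        {w : Fin d → ℤ | ∃ l : Fin d, (l : ℕ) ≤ (j : ℕ) + 1 ∧ w = fun i => A i l}) :
    ∀ j i k : Fin d, 1 ≤ (j : ℕ) → (i : ℕ) ≤ (j : ℕ) → (k : ℕ) ≤ (j : ℕ) →
      A j j ∣ A i k := by
  have hdiag : ∀ i, A i i ≠ 0 := by
    rw [Matrix.det_of_isUpperTriangular (fun i j h => hut i j h)] at hdet
    exact fun i => Finset.prod_ne_zero_iff.1 hdet i (Finset.mem_univ i)
  intro j i k _ _ hk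
  exact diag_dvd_columns A hut hdiag hideal j j.isLt i k hk
end

section
/- Fix d ≥ 1. For a monic polynomial f ∈ ℤ[X] of degree d, the quotient Z_f = ℤ[X]/(f) is a free ℤ-module with basis the classes of 1, X, …, X^{d-1}; let ρ_f : Z_f → ℤ^d be the corresponding coordinate isomorphism, ρ_f(Σ_{n=0}^{d-1} a_n X^n) = (a_0,…,a_{d-1}). For a positive integer n, let c_n^{(d)} be the number of subgroups Λ ⊆ ℤ^d of index n such that Λ = ρ_f(I) for some monic f ∈ ℤ[X] of degree d and some ideal I ⊆ Z_f. Then c_n^{(d)} = Σ ∏_{i=1}^{d-1} b_i^i, where the sum runs over all d-tuples (b_1,…,b_d) of positive integers with ∏_{i=1}^d b_i^i = n (and the empty product for d = 1 is 1). -/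
/-!
Vectors in `ℤ^d` are read as polynomials of degree `< d`. A lattice `Λ` is an ideal lattice iff it
is stable under multiplication by `X` modulo some monic `X ^ d + g` (`isIdealLattice_iff`).

Let `M` be an ideal lattice of finite index in degree `< d + 1`, and let `c` generate the ideal of
coefficients of `X ^ d` of its elements. Then `c` divides every element of `M` (`exists_content`),
so `M = c • N` where `N` contains a monic polynomial of degree `d` and contains `X * p` for each
`p ∈ N` of degree `< d`: call such an `N` monic. Conversely each dilate of a monic lattice is an
ideal lattice, and `(c, N)` is determined by `M` (`dilateMap_bijective`). The index of `M` is
`c ^ (d + 1)` times that of `N`.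

A monic lattice `Λ` in degree `≤ d + 1` is spanned by its part `M` of degree `< d + 1` and a monic
polynomial `X ^ (d + 1) + g`, where `M` is an ideal lattice for `g`, has the same index as `Λ`, and
`g` matters only modulo `M`. If `M = c • N` with `N` monic, the admissible `g` form a coset of `N`,
so there are `[N : c • N] = c ^ (d + 1)` monic lattices with low-degree part `M` (`card_fiber`).

By induction, monic lattices in degree `≤ d` correspond to tuples `b_1, …, b_d` weighted by
`∏ b_i ^ i`, with index `∏ b_i ^ i` (`exists_monicSub_equiv`). A last, unweighted entry
`b_(d+1) = c` accounts for the ideal lattices themselves.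
-/

open Polynomial

/-- A subgroup `Λ ⊆ ℤ^d` is an ideal lattice if it is the image, under the coordinate
isomorphism with respect to the basis `1, X, …, X^{d-1}`, of an ideal of `ℤ[X]/(f)` for
some monic `f` of degree `d`. -/
def IsIdealLattice (d : ℕ) (Λ : AddSubgroup (Fin d → ℤ)) : Prop :=
  ∃ f : Polynomial ℤ, f.Monic ∧ f.natDegree = d ∧
    ∃ I : Ideal (Polynomial ℤ ⧸ Ideal.span {f}),
      ∀ v : Fin d → ℤ, v ∈ Λ ↔
        Ideal.Quotient.mk (Ideal.span {f}) (∑ i : Fin d, C (v i) * X ^ (i : ℕ)) ∈ I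

/-! ### Ideal lattices and multiplication by `X` -/

/-- Reduction of a polynomial of degree at most `d` (given by its coefficient vector) modulo the
monic polynomial `X ^ d + ∑ i, g i * X ^ i`. -/
def redHom {d : ℕ} (g : Fin d → ℤ) : (Fin (d + 1) → ℤ) →+ (Fin d → ℤ) where
  toFun w := fun i => w i.castSucc - w (Fin.last d) * g i
  map_zero' := by ext; simp
  map_add' u v := by ext; simp; ring

lemma redHom_apply {d : ℕ} (g : Fin d → ℤ) (w : Fin (d + 1) → ℤ) (i : Fin d) :
    redHom g w i = w i.castSucc - w (Fin.last d) * g i := rfl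

lemma redHom_snoc_zero {d : ℕ} (g v : Fin d → ℤ) :
    redHom g (Fin.snoc v 0 : Fin (d + 1) → ℤ) = v := by
  ext i; simp [redHom_apply]

lemma redHom_snoc_one {d : ℕ} (g h : Fin d → ℤ) :
    redHom g (Fin.snoc h 1 : Fin (d + 1) → ℤ) = h - g := by
  ext i; simp [redHom_apply]

lemma redHom_surjective {d : ℕ} (g : Fin d → ℤ) : Function.Surjective (redHom g) :=
  fun v => ⟨_, redHom_snoc_zero g v⟩

/-- `M` is stable under multiplication by `X` modulo `X ^ d + ∑ i, g i * X ^ i`; multiplication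
by `X` on coefficient vectors is `Fin.cons 0`. -/
def IsStable {d : ℕ} (M : AddSubgroup (Fin d → ℤ)) (g : Fin d → ℤ) : Prop :=
  ∀ v ∈ M, redHom g (Fin.cons 0 v : Fin (d + 1) → ℤ) ∈ M

/-- The polynomial with coefficient vector `v`. -/
noncomputable def toPoly (d : ℕ) : (Fin d → ℤ) →+ ℤ[X] where
  toFun v := ∑ i : Fin d, C (v i) * X ^ (i : ℕ)
  map_zero' := by simp
  map_add' u v := by simp [add_mul, Finset.sum_add_distrib]

lemma toPoly_apply {d : ℕ} (v : Fin d → ℤ) :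
    toPoly d v = ∑ i : Fin d, C (v i) * X ^ (i : ℕ) := rfl

lemma toPoly_degree_lt {d : ℕ} (v : Fin d → ℤ) : (toPoly d v).degree < d := by
  rw [toPoly_apply]
  exact degree_sum_fin_lt v

lemma toPoly_coeff {d : ℕ} (v : Fin d → ℤ) (i : Fin d) : (toPoly d v).coeff i = v i := by
  simp [toPoly_apply, coeff_X_pow, Fin.val_inj]

lemma toPoly_cons {d : ℕ} (v : Fin d → ℤ) :
    toPoly (d + 1) (Fin.cons 0 v : Fin (d + 1) → ℤ) = X * toPoly d v := by
  rw [toPoly_apply, Fin.sum_univ_succ, toPoly_apply, Finset.mul_sum]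
  simp only [Fin.cons_zero, Fin.cons_succ, Fin.val_succ, C_0, zero_mul, zero_add, pow_succ]
  exact Finset.sum_congr rfl fun i _ => by ring

lemma toPoly_redHom {d : ℕ} (g : Fin d → ℤ) (w : Fin (d + 1) → ℤ) :
    toPoly (d + 1) w =
      toPoly d (redHom g w) + C (w (Fin.last d)) * (X ^ d + toPoly d g) := by
  simp only [toPoly_apply, redHom_apply]
  rw [Fin.sum_univ_castSucc, mul_add, Finset.mul_sum]
  simp only [Fin.val_castSucc, Fin.val_last, C_sub, C_mul, sub_mul, Finset.sum_sub_distrib,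
    mul_assoc]
  ring

lemma isIdealLattice_iff {d : ℕ} (Λ : AddSubgroup (Fin d → ℤ)) :
    IsIdealLattice d Λ ↔ ∃ g, IsStable Λ g := by
  constructor
  · rintro ⟨f, hf, hdeg, I, hI⟩
    refine ⟨fun i => f.coeff i, fun v hv => (hI _).2 ?_⟩
    have hfe : X ^ d + toPoly d (fun i => f.coeff i) = f := by
      conv_rhs => rw [hf.as_sum, hdeg]
      rw [toPoly_apply, Finset.sum_range]
    have key := toPoly_redHom (fun i : Fin d => f.coeff i) (Fin.cons 0 v : Fin (d + 1) → ℤ)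
    rw [hfe, toPoly_cons] at key
    have h1 : toPoly d (redHom (fun i : Fin d => f.coeff i) (Fin.cons 0 v : Fin (d + 1) → ℤ))
        = X * toPoly d v - C ((Fin.cons 0 v : Fin (d + 1) → ℤ) (Fin.last d)) * f := by
      rw [key]; ring
    rw [← toPoly_apply, h1, map_sub, map_mul, map_mul,
      Ideal.Quotient.eq_zero_iff_mem.2 (Ideal.mem_span_singleton_self f), mul_zero, sub_zero]
    exact I.mul_mem_left _ ((hI v).1 hv)
  · rintro ⟨g, hg⟩
    have hmon : (X ^ d + toPoly d g).Monic := monic_X_pow_add (toPoly_degree_lt g)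
    have hnat : (X ^ d + toPoly d g).natDegree = d := by
      rw [natDegree_eq_of_degree_eq (degree_add_eq_left_of_degree_lt _), natDegree_X_pow]
      rw [degree_X_pow]; exact toPoly_degree_lt g
    set f := X ^ d + toPoly d g with hf
    let J : AddSubgroup (ℤ[X] ⧸ Ideal.span {f}) :=
      Λ.map ((Ideal.Quotient.mk (Ideal.span {f})).toAddMonoidHom.comp (toPoly d))
    have hJX : ∀ y ∈ J, Ideal.Quotient.mk (Ideal.span {f}) X * y ∈ J := by
      rintro _ ⟨v, hv, rfl⟩
      refine ⟨_, hg v hv, ?_⟩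
      have key := toPoly_redHom g (Fin.cons 0 v : Fin (d + 1) → ℤ)
      rw [toPoly_cons, ← hf] at key
      have := congrArg (Ideal.Quotient.mk (Ideal.span {f})) key
      rw [map_add, map_mul, map_mul,
        Ideal.Quotient.eq_zero_iff_mem.2 (Ideal.mem_span_singleton_self f), mul_zero,
        add_zero] at this
      exact this.symm
    have hJ : ∀ (p : ℤ[X]) (y), y ∈ J → Ideal.Quotient.mk (Ideal.span {f}) p * y ∈ J := by
      intro p
      induction p using Polynomial.induction_on with
      | C a =>
        intro y hy
        have : Ideal.Quotient.mk (Ideal.span {f}) (C a) * y = a • y := by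
          rw [zsmul_eq_mul]; simp
        rw [this]
        exact J.zsmul_mem hy a
      | add p q hp hq =>
        intro y hy
        rw [map_add, add_mul]
        exact J.add_mem (hp y hy) (hq y hy)
      | monomial n a h =>
        intro y hy
        have : Ideal.Quotient.mk (Ideal.span {f}) (C a * X ^ (n + 1)) * y =
            Ideal.Quotient.mk (Ideal.span {f}) (C a * X ^ n) *
              (Ideal.Quotient.mk (Ideal.span {f}) X * y) := by
          simp only [map_mul, pow_succ]; ring
        rw [this]
        exact h _ (hJX y hy)
    let I : Ideal (ℤ[X] ⧸ Ideal.span {f}) :=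
      { J with
        smul_mem' := fun c y hy => by
          obtain ⟨p, rfl⟩ := Ideal.Quotient.mk_surjective c
          exact hJ p y hy }
    refine ⟨f, hmon, hnat, I, fun v => ⟨fun hv => ⟨v, hv, rfl⟩, ?_⟩⟩
    rintro ⟨u, hu, huv⟩
    -- `f` divides a difference of polynomials of degree `< d`, so the difference vanishes.
    have h1 : f ∣ toPoly d (u - v) := by
      rw [← Ideal.mem_span_singleton, map_sub, ← Ideal.Quotient.eq]
      exact huv
    have h2 : toPoly d (u - v) = 0 := by
      refine eq_zero_of_dvd_of_degree_lt h1 ?_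
      rw [degree_eq_natDegree hmon.ne_zero, hnat]
      exact toPoly_degree_lt _
    have h3 : u = v := by
      ext i
      have := toPoly_coeff (u - v) i
      rw [h2, coeff_zero, Pi.sub_apply] at this
      omega
    exact h3 ▸ hu

/-! ### Extending, restricting and dilating lattices -/

/-- The lattice spanned by `M` (in degrees `< d`) and the monic polynomial
`X ^ d + ∑ i, g i * X ^ i`. -/
def extend {d : ℕ} (g : Fin d → ℤ) (M : AddSubgroup (Fin d → ℤ)) :
    AddSubgroup (Fin (d + 1) → ℤ) := M.comap (redHom g)

lemma mem_extend {d : ℕ} {g : Fin d → ℤ} {M : AddSubgroup (Fin d → ℤ)} {w : Fin (d + 1) → ℤ} :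
    w ∈ extend g M ↔ redHom g w ∈ M := Iff.rfl

lemma index_extend {d : ℕ} (g : Fin d → ℤ) (M : AddSubgroup (Fin d → ℤ)) :
    (extend g M).index = M.index :=
  AddSubgroup.index_comap_of_surjective _ (redHom_surjective g)

/-- Viewing a polynomial of degree `< d` as one of degree `< d + 1`. -/
def snocHom (d : ℕ) : (Fin d → ℤ) →+ (Fin (d + 1) → ℤ) where
  toFun v := Fin.snoc v 0
  map_zero' := by
    ext i; refine Fin.lastCases ?_ (fun i => ?_) i <;> simp
  map_add' u v := by
    ext i; refine Fin.lastCases ?_ (fun i => ?_) i <;> simp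

/-- The elements of `Λ` of degree `< d`. -/
def restr {d : ℕ} (Λ : AddSubgroup (Fin (d + 1) → ℤ)) : AddSubgroup (Fin d → ℤ) :=
  Λ.comap (snocHom d)

lemma mem_restr {d : ℕ} {Λ : AddSubgroup (Fin (d + 1) → ℤ)} {v : Fin d → ℤ} :
    v ∈ restr Λ ↔ (Fin.snoc v 0 : Fin (d + 1) → ℤ) ∈ Λ := Iff.rfl

lemma restr_extend {d : ℕ} (g : Fin d → ℤ) (M : AddSubgroup (Fin d → ℤ)) :
    restr (extend g M) = M := by
  ext v; rw [mem_restr, mem_extend, redHom_snoc_zero]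

/-- `Λ` contains `X * p` whenever it contains `p` of degree `< d`. -/
def ShiftClosed {d : ℕ} (Λ : AddSubgroup (Fin (d + 1) → ℤ)) : Prop :=
  ∀ v : Fin d → ℤ, (Fin.snoc v 0 : Fin (d + 1) → ℤ) ∈ Λ → (Fin.cons 0 v : Fin (d + 1) → ℤ) ∈ Λ

/-- A shift-closed lattice that contains a monic polynomial of degree `d`. -/
def IsMonicLattice {d : ℕ} (Λ : AddSubgroup (Fin (d + 1) → ℤ)) : Prop :=
  ShiftClosed Λ ∧ ∃ w ∈ Λ, w (Fin.last d) = 1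

lemma snoc_init_zero {d : ℕ} (w : Fin (d + 1) → ℤ) (h : w (Fin.last d) = 0) :
    (Fin.snoc (fun i : Fin d => w i.castSucc) 0 : Fin (d + 1) → ℤ) = w := by
  ext i; refine Fin.lastCases ?_ (fun i => ?_) i <;> simp [h]

lemma cons_snoc_zero {d : ℕ} (v : Fin d → ℤ) :
    (Fin.cons 0 (Fin.snoc v 0 : Fin (d + 1) → ℤ) : Fin (d + 2) → ℤ) =
      Fin.snoc (Fin.cons 0 v : Fin (d + 1) → ℤ) 0 := by
  ext i
  rw [Fin.cons_snoc_eq_snoc_cons]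

lemma isMonicLattice_extend {d : ℕ} {g : Fin d → ℤ} {M : AddSubgroup (Fin d → ℤ)} :
    IsMonicLattice (extend g M) ↔ IsStable M g := by
  constructor
  · rintro ⟨h, -⟩ v hv
    exact h v (by rwa [mem_extend, redHom_snoc_zero])
  · intro h
    refine ⟨fun v hv => h v ?_, (Fin.snoc g 1 : Fin (d + 1) → ℤ), ?_, by simp⟩
    · rwa [mem_extend, redHom_snoc_zero] at hv
    · rw [mem_extend, redHom_snoc_one, sub_self]; exact M.zero_mem

lemma eq_extend_restr {d : ℕ} {Λ : AddSubgroup (Fin (d + 1) → ℤ)} {w : Fin (d + 1) → ℤ}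
    (hw : w ∈ Λ) (hw1 : w (Fin.last d) = 1) :
    extend (fun i => w i.castSucc) (restr Λ) = Λ := by
  ext u
  rw [mem_extend, mem_restr]
  have : (Fin.snoc (redHom (fun i : Fin d => w i.castSucc) u) 0 : Fin (d + 1) → ℤ) =
      u - u (Fin.last d) • w := by
    ext i; refine Fin.lastCases ?_ (fun i => ?_) i <;> simp [redHom_apply, hw1]
  rw [this]
  exact ⟨fun h => by simpa using Λ.add_mem h (Λ.zsmul_mem hw (u (Fin.last d))),
    fun h => Λ.sub_mem h (Λ.zsmul_mem hw _)⟩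

lemma extend_eq_extend_iff {d : ℕ} {g h : Fin d → ℤ} {M : AddSubgroup (Fin d → ℤ)} :
    extend g M = extend h M ↔ g - h ∈ M := by
  constructor
  · intro e
    rw [← redHom_snoc_one, ← mem_extend, ← e, mem_extend, redHom_snoc_one, sub_self]
    exact M.zero_mem
  · intro e
    ext u
    have : redHom h u = redHom g u + u (Fin.last d) • (g - h) := by
      ext i; simp [redHom_apply]; ring
    rw [mem_extend, mem_extend, this, M.add_mem_cancel_right (M.zsmul_mem e _)]

/-- The dilate `c • N`. -/
def dilate {d : ℕ} (c : ℕ) (N : AddSubgroup (Fin d → ℤ)) : AddSubgroup (Fin d → ℤ) :=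
  N.map (nsmulAddMonoidHom (α := Fin d → ℤ) c)

lemma mem_dilate {d : ℕ} {c : ℕ} {N : AddSubgroup (Fin d → ℤ)} {v : Fin d → ℤ} :
    v ∈ dilate c N ↔ ∃ u ∈ N, c • u = v := Iff.rfl

lemma smul_mem_dilate {d : ℕ} {c : ℕ} (hc : c ≠ 0) {N : AddSubgroup (Fin d → ℤ)}
    {v : Fin d → ℤ} : c • v ∈ dilate c N ↔ v ∈ N := by
  rw [mem_dilate]
  exact ⟨fun ⟨u, hu, e⟩ => smul_right_injective _ hc e ▸ hu, fun h => ⟨v, h, rfl⟩⟩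

lemma index_dilate {d : ℕ} {c : ℕ} (hc : c ≠ 0) (N : AddSubgroup (Fin d → ℤ)) :
    (dilate c N).index = N.index * c ^ d := by
  rw [dilate, AddSubgroup.index_map_of_injective _
    (AddSubgroup.nsmulAddMonoidHom_injective_of_isTorsionFree hc),
    AddSubgroup.index_range_nsmul]
  simp

lemma dilate_le {d : ℕ} (c : ℕ) (N : AddSubgroup (Fin d → ℤ)) : dilate c N ≤ N := by
  rintro _ ⟨u, hu, rfl⟩
  exact N.nsmul_mem hu c

/-- A dilate of a monic lattice is stable: if `w ∈ N` is monic of degree `d`, multiplication by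
`X` may be taken modulo `X * w`. -/
lemma exists_isStable_dilate {d : ℕ} {N : AddSubgroup (Fin (d + 1) → ℤ)}
    (hN : IsMonicLattice N) (c : ℕ) : ∃ g, IsStable (dilate c N) g := by
  obtain ⟨hs, w, hw, hw1⟩ := hN
  refine ⟨fun i => (Fin.cons 0 w : Fin (d + 2) → ℤ) i.castSucc, ?_⟩
  rintro _ ⟨v, hv, rfl⟩
  have hv' : v - v (Fin.last d) • w ∈ N := N.sub_mem hv (N.zsmul_mem hw _)
  rw [← snoc_init_zero (v - v (Fin.last d) • w) (by simp [hw1])] at hv'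
  refine ⟨_, hs _ hv', ?_⟩
  ext i
  refine Fin.cases ?_ (fun i => ?_) i
  · simp [redHom_apply]
  · have e1 : (Fin.last (d + 1)) = (Fin.last d).succ := rfl
    simp [redHom_apply, e1, -Fin.succ_last]
    ring

/-! ### The content of an ideal lattice -/

lemma exists_top_generator {d : ℕ} (M : AddSubgroup (Fin (d + 1) → ℤ)) (hM : M.index ≠ 0) :
    ∃ c : ℕ, c ≠ 0 ∧ (∃ w ∈ M, w (Fin.last d) = c) ∧ ∀ v ∈ M, (c : ℤ) ∣ v (Fin.last d) := by
  obtain ⟨a, ha⟩ := Int.subgroup_cyclic (M.map (Pi.evalAddMonoidHom (fun _ => ℤ) (Fin.last d)))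
  rw [← AddSubgroup.zmultiples_eq_closure] at ha
  have hdvd : ∀ v ∈ M, a ∣ v (Fin.last d) := by
    intro v hv
    rw [← Int.mem_zmultiples_iff, ← ha]
    exact ⟨v, hv, rfl⟩
  have ha0 : a ≠ 0 := by
    rintro rfl
    obtain ⟨m, hm, -, hmem⟩ := AddSubgroup.exists_nsmul_mem_of_index_ne_zero hM 1
    have := hdvd _ hmem
    simp at this
    omega
  have hmem : (a.natAbs : ℤ) ∈ M.map (Pi.evalAddMonoidHom (fun _ => ℤ) (Fin.last d)) := by
    rw [ha, Int.mem_zmultiples_iff]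
    exact Int.dvd_natAbs_self
  obtain ⟨w, hw, hwa⟩ := hmem
  exact ⟨a.natAbs, by simpa using ha0, ⟨w, hw, hwa⟩,
    fun v hv => Int.natAbs_dvd.2 (hdvd v hv)⟩

/-- The common content of a shift-closed lattice is the generator of its leading coefficients in
top degree. By induction on the degree, the elements of degree `< d` are divisible by the leading
coefficient generator `c'` in degree `d - 1`; if `w` has top coefficient `c` and `c' = c * e`, then
`e * w` agrees modulo `c'` with `X` times an element divisible by `c'`, so `c` divides `w`. -/
lemma exists_content (d : ℕ) : ∀ (M : AddSubgroup (Fin (d + 1) → ℤ)), M.index ≠ 0 →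
    ShiftClosed M → ∃ c : ℕ, c ≠ 0 ∧ (∃ w ∈ M, w (Fin.last d) = c) ∧
      ∀ v ∈ M, ∀ i, (c : ℤ) ∣ v i := by
  induction d with
  | zero =>
    intro M hM _
    obtain ⟨c, hc, ⟨w, hw, hwc⟩, hdvd⟩ := exists_top_generator M hM
    refine ⟨c, hc, ⟨w, hw, hwc⟩, fun v hv i => ?_⟩
    rw [show i = Fin.last 0 from Fin.ext (by simp)]
    exact hdvd v hv
  | succ d ih =>
    intro M hM hs
    obtain ⟨c, hc, ⟨w, hw, hwc⟩, hdvd⟩ := exists_top_generator M hM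
    have hr : (restr M).index ≠ 0 := by
      rw [restr, AddSubgroup.index_comap]
      exact ne_zero_of_dvd_ne_zero hM (AddSubgroup.relIndex_dvd_index_of_normal _ _)
    obtain ⟨c', hc', ⟨w', hw', hwc'⟩, hdvd'⟩ := ih (restr M) hr (by
      intro v hv
      rw [mem_restr] at hv ⊢
      rw [← cons_snoc_zero]
      exact hs _ hv)
    have hx : (Fin.cons 0 w' : Fin (d + 2) → ℤ) ∈ M := hs _ hw'
    have hxl : (Fin.cons 0 w' : Fin (d + 2) → ℤ) (Fin.last (d + 1)) = c' := by
      rw [← hwc']; rfl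
    have hxd : ∀ i, (c' : ℤ) ∣ (Fin.cons 0 w' : Fin (d + 2) → ℤ) i := by
      intro i
      refine Fin.cases ?_ (fun i => ?_) i
      · simp
      · simpa using hdvd' _ hw' i
    have hlow : ∀ v ∈ M, v (Fin.last (d + 1)) = 0 → ∀ i, (c' : ℤ) ∣ v i := by
      intro v hv hv0 i
      refine Fin.lastCases ?_ (fun i => ?_) i
      · simp [hv0]
      · rw [← snoc_init_zero v hv0] at hv
        exact hdvd' (fun i => v i.castSucc) hv i
    obtain ⟨e, he⟩ : (c : ℤ) ∣ c' := hxl ▸ hdvd _ hx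
    have he0 : e ≠ 0 := by
      rintro rfl
      apply hc'
      simpa using he
    have hwd : ∀ i, (c : ℤ) ∣ w i := by
      intro i
      have h1 := hlow (e • w - (Fin.cons 0 w' : Fin (d + 2) → ℤ))
        (M.sub_mem (M.zsmul_mem hw e) hx) (by
          rw [Pi.sub_apply, Pi.smul_apply, hxl, hwc, he, smul_eq_mul]; ring) i
      have h2 : (c' : ℤ) ∣ e * w i := by simpa using dvd_add h1 (hxd i)
      rw [he, mul_comm] at h2
      exact Int.dvd_of_mul_dvd_mul_left he0 h2
    refine ⟨c, hc, ⟨w, hw, hwc⟩, fun v hv i => ?_⟩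
    obtain ⟨k, hk⟩ := hdvd v hv
    have h1 := hlow (v - k • w) (M.sub_mem hv (M.zsmul_mem hw k)) (by
      rw [Pi.sub_apply, Pi.smul_apply, hwc, hk, smul_eq_mul]; ring) i
    have h2 : (c : ℤ) ∣ v i - k * w i := (Dvd.intro _ he.symm).trans h1
    simpa using dvd_add h2 ((hwd i).mul_left k)

lemma IsStable.shiftClosed {d : ℕ} {M : AddSubgroup (Fin (d + 1) → ℤ)} {g : Fin (d + 1) → ℤ}
    (h : IsStable M g) : ShiftClosed M := by
  intro v hv
  have := h _ hv
  rwa [cons_snoc_zero, redHom_snoc_zero] at this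

/-- Finite-index lattices in degree `< d` stable under multiplication by `X` modulo some monic
polynomial of degree `d`, i.e. ideal lattices of finite index. -/
abbrev StableSub (d : ℕ) : Type :=
  {M : AddSubgroup (Fin d → ℤ) // M.index ≠ 0 ∧ ∃ g, IsStable M g}

/-- Finite-index monic lattices in degree `≤ d`. -/
abbrev MonicSub (d : ℕ) : Type :=
  {N : AddSubgroup (Fin (d + 1) → ℤ) // N.index ≠ 0 ∧ IsMonicLattice N}

/-! ### Ideal lattices as dilates of monic lattices -/

/-- Dilation of monic lattices. -/
def dilateMap (d : ℕ) (y : ℕ+ × MonicSub d) : StableSub (d + 1) :=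
  ⟨dilate y.1 y.2.1, by
    rw [index_dilate y.1.ne_zero]
    exact mul_ne_zero y.2.2.1 (pow_ne_zero _ y.1.ne_zero), exists_isStable_dilate y.2.2.2 _⟩

lemma dvd_of_dilate_le {d : ℕ} {c c' : ℕ} {N N' : AddSubgroup (Fin (d + 1) → ℤ)}
    (hN : IsMonicLattice N) (h : dilate c N ≤ dilate c' N') : c' ∣ c := by
  obtain ⟨-, w, hw, hw1⟩ := hN
  obtain ⟨u, -, hu⟩ := h ⟨w, hw, rfl⟩
  have := congrFun hu (Fin.last d)
  simp [hw1] at this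
  exact Int.natCast_dvd_natCast.1 (Dvd.intro _ this)

/-- Every ideal lattice of finite index is, in a unique way, a dilate of a monic lattice; the
dilation factor is the content. -/
lemma dilateMap_bijective (d : ℕ) : Function.Bijective (dilateMap d) := by
  constructor
  · rintro ⟨c, N, hN⟩ ⟨c', N', hN'⟩ h
    have h' : dilate c N = dilate c' N' := congrArg Subtype.val h
    have hc : c = c' := PNat.eq
      (Nat.dvd_antisymm (dvd_of_dilate_le hN'.2 h'.ge) (dvd_of_dilate_le hN.2 h'.le))
    subst hc
    have hNN : N = N' := by
      ext v
      rw [← smul_mem_dilate c.ne_zero, h', smul_mem_dilate c.ne_zero]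
    subst hNN
    rfl
  · rintro ⟨M, hM, g, hg⟩
    obtain ⟨c, hc, ⟨w, hw, hwc⟩, hdvd⟩ := exists_content d M hM hg.shiftClosed
    let N : AddSubgroup (Fin (d + 1) → ℤ) := M.comap (nsmulAddMonoidHom c)
    have hmem : ∀ v, v ∈ N ↔ c • v ∈ M := fun v => Iff.rfl
    have hdiv : ∀ v ∈ M, ∃ u ∈ N, c • u = v := by
      intro v hv
      choose u hu using hdvd v hv
      have hcu : c • u = v := by
        ext i; simp [hu i]
      exact ⟨u, by rw [hmem, hcu]; exact hv, hcu⟩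
    have hMN : dilate c N = M := by
      ext v
      rw [mem_dilate]
      exact ⟨by rintro ⟨u, hu, rfl⟩; exact hu, hdiv v⟩
    have hN0 : N.index ≠ 0 := by
      rw [← hMN, index_dilate hc] at hM
      exact left_ne_zero_of_mul hM
    have hN1 : IsMonicLattice N := by
      constructor
      · intro v hv
        rw [hmem] at hv ⊢
        have e1 : c • (Fin.snoc v 0 : Fin (d + 1) → ℤ) = Fin.snoc (c • v) 0 := by
          ext i; refine Fin.lastCases ?_ (fun i => ?_) i <;> simp
        have e2 : c • (Fin.cons 0 v : Fin (d + 1) → ℤ) = Fin.cons 0 (c • v) := by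
          ext i; refine Fin.cases ?_ (fun i => ?_) i <;> simp
        rw [e1] at hv
        rw [e2]
        exact hg.shiftClosed _ hv
      · obtain ⟨u, hu, rfl⟩ := hdiv w hw
        refine ⟨u, hu, ?_⟩
        have hc' : (c : ℤ) ≠ 0 := by exact_mod_cast hc
        rw [Pi.smul_apply, nsmul_eq_mul] at hwc
        exact mul_left_cancel₀ hc' (by rw [hwc, mul_one])
    exact ⟨(⟨c, Nat.pos_of_ne_zero hc⟩, ⟨N, hN0, hN1⟩), Subtype.ext hMN⟩

/-- The bijection given by `dilateMap`. -/
noncomputable def dilateEquiv (d : ℕ) : ℕ+ × MonicSub d ≃ StableSub (d + 1) :=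
  Equiv.ofBijective _ (dilateMap_bijective d)

/-! ### Monic lattices with a given low-degree part -/

/-- A monic lattice contains a monic polynomial, modulo which its low-degree part is stable. -/
lemma IsMonicLattice.exists_extend {d : ℕ} {Λ : AddSubgroup (Fin (d + 1) → ℤ)}
    (h : IsMonicLattice Λ) : ∃ g, IsStable (restr Λ) g ∧ extend g (restr Λ) = Λ := by
  obtain ⟨w, hw, hw1⟩ := h.2
  have e := eq_extend_restr hw hw1
  exact ⟨_, isMonicLattice_extend.1 (by rwa [e]), e⟩

lemma index_restr {d : ℕ} {Λ : AddSubgroup (Fin (d + 1) → ℤ)}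
    (h : IsMonicLattice Λ) : (restr Λ).index = Λ.index := by
  obtain ⟨g, -, e⟩ := h.exists_extend
  rw [← index_extend g, e]

/-- The low-degree part of a monic lattice. -/
def restrMap (d : ℕ) (Λ : MonicSub (d + 1)) : StableSub (d + 1) :=
  ⟨restr Λ.1, by rw [index_restr Λ.2.2]; exact Λ.2.1,
    Λ.2.2.exists_extend.imp fun _ h => h.1⟩

/-- The monic polynomials modulo which `dilate c N` is stable form a coset of `N`, and two of them
extend it to the same monic lattice exactly when they differ by an element of `dilate c N`. -/
lemma card_fiber (d : ℕ) (c : ℕ+) (N : MonicSub d) :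
    Nat.card {Λ : MonicSub (d + 1) // restrMap d Λ = dilateMap d (c, N)} =
      (c : ℕ) ^ (d + 1) := by
  obtain ⟨g₀, hg₀⟩ := (dilateMap d (c, N)).2.2
  have hM := (dilateMap d (c, N)).2.1
  change IsStable (dilate c N.1) g₀ at hg₀
  change (dilate c N.1).index ≠ 0 at hM
  have hstab : ∀ x ∈ N.1, IsStable (dilate c N.1) (g₀ + x) := by
    rintro x hx _ ⟨u, hu, rfl⟩
    have h1 := hg₀ _ ⟨u, hu, rfl⟩
    have h2 : (c : ℕ) • (u (Fin.last d) • x) ∈ dilate c N.1 :=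
      (smul_mem_dilate c.ne_zero).2 (N.1.zsmul_mem hx _)
    have e : redHom (g₀ + x) (Fin.cons 0 (nsmulAddMonoidHom (c : ℕ) u) : Fin (d + 2) → ℤ) =
        redHom g₀ (Fin.cons 0 (nsmulAddMonoidHom (c : ℕ) u) : Fin (d + 2) → ℤ) -
          (c : ℕ) • (u (Fin.last d) • x) := by
      ext i
      have e1 : (Fin.last (d + 1)) = (Fin.last d).succ := rfl
      simp [redHom_apply, e1, -Fin.succ_last]
      ring
    rw [e]
    exact AddSubgroup.sub_mem _ h1 h2
  let Ψ : N.1 → {Λ : MonicSub (d + 1) // restrMap d Λ = dilateMap d (c, N)} := fun x =>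
    ⟨⟨extend (g₀ + x) (dilate c N.1), by rw [index_extend]; exact hM,
      isMonicLattice_extend.2 (hstab x x.2)⟩, Subtype.ext (restr_extend _ _)⟩
  have hsurj : Function.Surjective Ψ := by
    rintro ⟨⟨Λ, hΛ0, hΛ⟩, hr⟩
    have hr' : restr Λ = dilate c N.1 := congrArg Subtype.val hr
    obtain ⟨g, hg, e⟩ := hΛ.exists_extend
    rw [hr'] at hg e
    obtain ⟨w, hw, hw1⟩ := N.2.2.2
    have hx : g - g₀ ∈ N.1 := by
      have hcw : (c : ℕ) • w ∈ dilate c N.1 := ⟨w, hw, rfl⟩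
      rw [← smul_mem_dilate c.ne_zero]
      have h1 := AddSubgroup.sub_mem _ (hg₀ _ hcw) (hg _ hcw)
      convert h1 using 1
      ext i
      have e1 : (Fin.last (d + 1)) = (Fin.last d).succ := rfl
      simp [redHom_apply, e1, -Fin.succ_last, hw1]
      ring
    refine ⟨⟨g - g₀, hx⟩, Subtype.ext (Subtype.ext ?_)⟩
    change extend (g₀ + (g - g₀)) _ = Λ
    rw [add_sub_cancel, e]
  have hker : ∀ x y, Ψ x = Ψ y ↔ (x : Fin (d + 1) → ℤ) - y ∈ dilate c N.1 := by
    intro x y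
    rw [Subtype.ext_iff, Subtype.ext_iff]
    change extend _ _ = extend _ _ ↔ _
    rw [extend_eq_extend_iff, add_sub_add_left_eq_sub]
  have e : (N.1 ⧸ (dilate c N.1).addSubgroupOf N.1) ≃
      {Λ : MonicSub (d + 1) // restrMap d Λ = dilateMap d (c, N)} := by
    refine Equiv.trans (Quotient.congrRight fun x y => ?_)
      (Setoid.quotientKerEquivOfSurjective Ψ hsurj)
    rw [QuotientAddGroup.leftRel_apply, Setoid.ker_def, eq_comm, hker,
      AddSubgroup.mem_addSubgroupOf]
    simp [sub_eq_neg_add]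
  rw [← Nat.card_congr e]
  change (dilate c N.1).relIndex N.1 = _
  have h1 := AddSubgroup.relIndex_mul_index (dilate_le c N.1)
  rw [index_dilate c.ne_zero, mul_comm] at h1
  exact Nat.eq_of_mul_eq_mul_left (Nat.pos_of_ne_zero N.2.1) h1

/-- A monic lattice in degree `≤ d + 1` amounts to a content `c`, a monic lattice in degree `≤ d`
and one of `c ^ (d + 1)` choices of monic generator. -/
lemma exists_monicSub_succ_equiv (d : ℕ) :
    ∃ e : MonicSub (d + 1) ≃ Σ y : ℕ+ × MonicSub d, Fin ((y.1 : ℕ) ^ (d + 1)),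
      ∀ Λ, Λ.1.index = (e Λ).1.2.1.index * ((e Λ).1.1 : ℕ) ^ (d + 1) := by
  let f : MonicSub (d + 1) → ℕ+ × MonicSub d := fun Λ => (dilateEquiv d).symm (restrMap d Λ)
  have hf : ∀ Λ y, f Λ = y ↔ restrMap d Λ = dilateMap d y := fun Λ y =>
    (dilateEquiv d).symm_apply_eq
  have hcard : ∀ y, Nat.card {Λ // f Λ = y} = (y.1 : ℕ) ^ (d + 1) := by
    intro y
    rw [← card_fiber d y.1 y.2]
    exact Nat.card_congr (Equiv.subtypeEquivRight fun Λ => hf Λ y)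
  have hfib : ∀ y, Nonempty ({Λ // f Λ = y} ≃ Fin ((y.1 : ℕ) ^ (d + 1))) := by
    intro y
    rw [← hcard y]
    exact ⟨Nat.equivFinOfCardPos (by rw [hcard]; exact pow_ne_zero _ y.1.ne_zero)⟩
  refine ⟨(Equiv.sigmaFiberEquiv f).symm.trans
    (Equiv.sigmaCongrRight fun y => Classical.choice (hfib y)), fun Λ => ?_⟩
  change _ = (f Λ).2.1.index * ((f Λ).1 : ℕ) ^ (d + 1)
  rw [← index_dilate (f Λ).1.ne_zero, ← index_restr Λ.2.2]
  exact congrArg (fun M => M.1.index) ((hf Λ _).1 rfl)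

/-! ### Counting -/

/-- Splitting off the last entry of a tuple. -/
def splitLast (d : ℕ) :
    (Σ y : ℕ+ × (Σ b : Fin d → ℕ+, Fin (∏ j, (b j : ℕ) ^ ((j : ℕ) + 1))),
      Fin ((y.1 : ℕ) ^ (d + 1))) ≃
    (Σ b : Fin (d + 1) → ℕ+, Fin (∏ j, (b j : ℕ) ^ ((j : ℕ) + 1))) :=
  Equiv.trans (β := Σ p : ℕ+ × (Fin d → ℕ+),
      Fin (∏ j, (p.2 j : ℕ) ^ ((j : ℕ) + 1)) × Fin ((p.1 : ℕ) ^ (d + 1)))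
    { toFun := fun z => ⟨(z.1.1, z.1.2.1), (z.1.2.2, z.2)⟩
      invFun := fun z => ⟨(z.1.1, ⟨z.1.2, z.2.1⟩), z.2.2⟩
      left_inv := fun _ => rfl
      right_inv := fun _ => rfl } <|
  Equiv.sigmaCongr (Fin.snocEquiv fun _ => ℕ+) fun p =>
    finProdFinEquiv.trans (finCongr (by rw [Fin.prod_univ_castSucc]; simp [Fin.snocEquiv]))

/-- Monic lattices of index `m` in degree `≤ d` correspond to tuples `b` with
`∏ j, b j ^ (j + 1) = m` together with one of `m` choices. -/
lemma exists_monicSub_equiv (d : ℕ) :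
    ∃ e : MonicSub d ≃ Σ b : Fin d → ℕ+, Fin (∏ j, (b j : ℕ) ^ ((j : ℕ) + 1)),
      ∀ N, N.1.index = ∏ j, ((e N).1 j : ℕ) ^ ((j : ℕ) + 1) := by
  induction d with
  | zero =>
    have htop : ∀ N : MonicSub 0, N.1 = ⊤ := by
      rintro ⟨N, -, -, w, hw, hw1⟩
      refine (AddSubgroup.eq_top_iff' _).2 fun v => ?_
      have : v = v (Fin.last 0) • w := by
        ext i
        rw [show i = Fin.last 0 from Fin.ext (by simp)]
        rw [Pi.smul_apply, hw1, smul_eq_mul, mul_one]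
      rw [this]
      exact N.zsmul_mem hw _
    have : Subsingleton (MonicSub 0) :=
      ⟨fun a b => Subtype.ext ((htop a).trans (htop b).symm)⟩
    let N₀ : MonicSub 0 := 
      ⟨⊤, by simp, fun _ _ => AddSubgroup.mem_top _, 1, AddSubgroup.mem_top _, rfl⟩
    have hs : Subsingleton (Σ b : Fin 0 → ℕ+, Fin (∏ j, (b j : ℕ) ^ ((j : ℕ) + 1))) := by
      constructor
      rintro ⟨b, i⟩ ⟨b', i'⟩
      obtain rfl := Subsingleton.elim b b'
      have : i = i' := by
        have h := i.2
        have h' := i'.2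
        simp only [Finset.univ_eq_empty, Finset.prod_empty] at h h'
        exact Fin.ext (by omega)
      rw [this]
    refine ⟨⟨fun _ => ⟨Fin.elim0, ⟨0, by simp⟩⟩, fun _ => N₀, fun _ => Subsingleton.elim _ _,
      fun _ => Subsingleton.elim _ _⟩, fun N => ?_⟩
    rw [htop N]; simp
  | succ d ih =>
    obtain ⟨e, he⟩ := ih
    obtain ⟨e', he'⟩ := exists_monicSub_succ_equiv d
    refine ⟨(e'.trans (Equiv.sigmaCongr (Equiv.prodCongr (Equiv.refl _) e)
      fun y => Equiv.refl _)).trans (splitLast d), fun Λ => ?_⟩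
    rw [he', he, Fin.prod_univ_castSucc]
    simp [splitLast, Fin.snocEquiv, Equiv.sigmaCongr]
    rfl

/-- The exponents of the summand vanish on the last entry of the tuple. -/
lemma prod_weight (d : ℕ) (b : Fin (d + 1) → ℕ+) :
    ∏ j : Fin (d + 1), (b j : ℕ) ^ (if (j : ℕ) + 1 < d + 1 then (j : ℕ) + 1 else 0) =
      ∏ j : Fin d, (b j.castSucc : ℕ) ^ ((j : ℕ) + 1) := by
  rw [Fin.prod_univ_castSucc]
  simp

lemma finite_tuples (d n : ℕ) (hn : 0 < n) :
    Finite {b : Fin d → ℕ+ // ∏ j : Fin d, (b j : ℕ) ^ ((j : ℕ) + 1) = n} := by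
  refine Set.Finite.to_subtype (s := {b : Fin d → ℕ+ | _})
    ((Set.finite_Iic (fun _ => (⟨n, hn⟩ : ℕ+))).subset fun b hb j => ?_)
  have h1 : (b j : ℕ) ∣ n := by
    rw [← show _ = n from hb]
    exact (dvd_pow_self _ (Nat.succ_ne_zero _)).trans
      (Finset.dvd_prod_of_mem (fun j : Fin d => (b j : ℕ) ^ ((j : ℕ) + 1)) (Finset.mem_univ j))
  exact Nat.le_of_dvd hn h1

/-- Coefficient form of `ζ^{(d)}(s) = [∏_{i=1}^{d-1} ζ(i(s-1))]·ζ(ds)`: the number of ideal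
lattices in `ℤ^d` of index `n` equals `∑ ∏_{i=1}^{d-1} bᵢ^i`, summed over all tuples
`(b_1, …, b_d)` of positive integers with `∏_{i=1}^d bᵢ^i = n`. -/
theorem card_ideal_lattices_eq (d : ℕ) (hd : 1 ≤ d) (n : ℕ) (hn : 0 < n) :
    Nat.card {Λ : AddSubgroup (Fin d → ℤ) // Λ.index = n ∧ IsIdealLattice d Λ} =
      ∑ᶠ (b : Fin d → ℕ+) (_ : ∏ j : Fin d, (b j : ℕ) ^ ((j : ℕ) + 1) = n),
        ∏ j : Fin d, (b j : ℕ) ^ (if (j : ℕ) + 1 < d then (j : ℕ) + 1 else 0) := by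
  obtain ⟨d, rfl⟩ : ∃ k, d = k + 1 := ⟨d - 1, by omega⟩
  simp only [prod_weight]
  obtain ⟨e, he⟩ := exists_monicSub_equiv d
  let P : (Fin (d + 1) → ℕ+) → Prop := fun b => ∏ j, (b j : ℕ) ^ ((j : ℕ) + 1) = n
  let F : (Fin (d + 1) → ℕ+) → ℕ := fun b => ∏ j : Fin d, (b j.castSucc : ℕ) ^ ((j : ℕ) + 1)
  let e₁ : {Λ : AddSubgroup (Fin (d + 1) → ℤ) // Λ.index = n ∧ IsIdealLattice (d + 1) Λ} ≃
      {M : StableSub (d + 1) // M.1.index = n} :=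
    { toFun := fun Λ => ⟨⟨Λ.1, by rw [Λ.2.1]; exact hn.ne', (isIdealLattice_iff _).1 Λ.2.2⟩, Λ.2.1⟩
      invFun := fun M => ⟨M.1.1, M.2, (isIdealLattice_iff _).2 M.1.2.2⟩
      left_inv := fun _ => rfl
      right_inv := fun _ => rfl }
  let e₂ : ℕ+ × (Σ b : Fin d → ℕ+, Fin (∏ j, (b j : ℕ) ^ ((j : ℕ) + 1))) ≃ Σ b, Fin (F b) :=
    Equiv.trans (β := Σ p : ℕ+ × (Fin d → ℕ+), Fin (∏ j, (p.2 j : ℕ) ^ ((j : ℕ) + 1)))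
      { toFun := fun z => ⟨(z.1, z.2.1), z.2.2⟩
        invFun := fun z => (z.1.1, ⟨z.1.2, z.2⟩)
        left_inv := fun _ => rfl
        right_inv := fun _ => rfl }
      (Equiv.sigmaCongr (Fin.snocEquiv fun _ => ℕ+) fun p =>
        finCongr (by simp [F, Fin.snocEquiv]))
  let e₃ : StableSub (d + 1) ≃ Σ b, Fin (F b) :=
    ((dilateEquiv d).symm.trans (Equiv.prodCongr (Equiv.refl _) e)).trans e₂
  have he₃ : ∀ M, M.1.index = n ↔ P (e₃ M).1 := by
    intro M
    obtain ⟨⟨c, N⟩, rfl⟩ := (dilateEquiv d).surjective M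
    have h1 : ((dilateEquiv d) (c, N)).1.index = N.1.index * (c : ℕ) ^ (d + 1) :=
      index_dilate c.ne_zero _
    have h2 : ∏ j, ((e₃ (dilateEquiv d (c, N))).1 j : ℕ) ^ ((j : ℕ) + 1) =
        N.1.index * (c : ℕ) ^ (d + 1) := by
      rw [he N, Fin.prod_univ_castSucc]
      simp [e₃, e₂, Equiv.sigmaCongr, Fin.snocEquiv]
    rw [h1, ← h2]
  have := finite_tuples (d + 1) n hn
  have : Fintype {b // P b} := Fintype.ofFinite _
  rw [Nat.card_congr (e₁.trans ((e₃.subtypeEquiv he₃).trans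
    (Equiv.subtypeSigmaEquiv (fun b => Fin (F b)) P))), Nat.card_sigma,
    ← finsum_eq_sum_of_fintype]
  simp only [Nat.card_eq_fintype_card, Fintype.card_fin]
  exact finsum_subtype_eq_finsum_cond (f := F) P
end
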